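/- The Open Coloring Axiom implies that the measure algebra cannot be embedded into 𝒫(ℕ)/fin: assume that for every separable metric space X and every symmetric open set K₀ ⊆ X × X disjoint from the diagonal, either there is an uncountable Y ⊆ X such that (y,y') ∈ K₀ for all distinct y, y' ∈ Y, or X is the union of countably many sets Xₙ such that (y,y') ∉ K₀ for all distinct y, y' ∈ Xₙ. Then there is no map Φ from the Borel subsets of C = ℕ × 2^ℕ to subsets of ℕ such that: (i) if A Δ B is μ-null then Φ(A) Δ Φ(B) is finite; (ii) Φ(A ∪ B) Δ (Φ(A) ∪ Φ(B)) is finite and Φ(C ∖ A) Δ (ℕ ∖ Φ(A)) is finite, for all Borel A, B; and (iii) Φ(A) is finite if and only if μ(A) = 0. -/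

import Mathlib

open Set Function MeasureTheory

noncomputable section

/-- The Open Coloring Axiom: for every separable metric space `X` and every symmetric
open `K₀ ⊆ X × X` disjoint from the diagonal, either there is an uncountable
`K₀`-homogeneous set, or `X` is a countable union of `K₁`-homogeneous sets. -/
def OpenColoringAxiom : Prop :=
  ∀ (X : Type) [MetricSpace X], TopologicalSpace.SeparableSpace X →
    ∀ K : Set (X × X), IsOpen K → (∀ p ∈ K, (p.2, p.1) ∈ K) → (∀ x : X, (x, x) ∉ K) →
      (∃ Y : Set X, ¬ Y.Countable ∧ ∀ y ∈ Y, ∀ y' ∈ Y, y ≠ y' → (y, y') ∈ K) ∨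
      (∃ Xn : ℕ → Set X, (⋃ n, Xn n) = Set.univ ∧
        ∀ n : ℕ, ∀ y ∈ Xn n, ∀ y' ∈ Xn n, y ≠ y' → (y, y') ∉ K)

/-- The space `C = ℕ × 2^ℕ`. -/
abbrev SpaceC : Type := ℕ × (ℕ → Bool)

/-- The basic clopen subset `[s] = {x ∈ 2^ℕ : s ⊂ x}` of the Cantor space determined by
a finite binary sequence `s`. -/
def cyl (s : List Bool) : Set (ℕ → Bool) :=
  {x | ∀ i : Fin s.length, x i = s.get i}

/-!
Cut column `n` of `ℕ × 2^ℕ` into cells of depth `f n`. On unions of such cells, an embedding of the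
measure algebra becomes a homomorphism of `𝒫(ℕ)` modulo finite sets. OCA, applied to a colouring of
Veličković, makes such a homomorphism trivial on all but countably many members of a tree-like
almost disjoint family, and together with the boundedness of families of `ℵ₁` functions it yields
an infinite set `a` of columns on which, for every `f`, the homomorphism is induced by some point
map `G f`. A further application of OCA makes the maps `G f` coherent for all `f` in a dominating
family `H`: the cells around the points `G f m` with `f ∈ H` are nested. For each `m`, all those of
depth at least `m + 2` lie in a single cell of measure `2^-(m+2)`, and these cells together have
measure less than `1`. Hence each column `n` keeps a set of positive measure outside their union,
whose image contains some `e n ≥ n`. If `f ∈ H` dominates `e + 2`, the cells around `G f (e n)` lie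
in the union, but the image of their union contains almost all `e n`. So two disjoint sets have
images with infinite intersection.
-/

open Filter

/-! ### The Open Coloring Axiom for points coded by sequences -/

section Countability

variable {X β : Type*} [Countable β]

theorem exists_not_countable_sep {Y : Set X} (hY : ¬ Y.Countable) {r : X → β → Prop}
    (hr : ∀ y ∈ Y, ∃ b, r y b) : ∃ b, ¬ {y ∈ Y | r y b}.Countable := by
  by_contra! h
  refine hY ((countable_iUnion h).mono fun y hy => ?_)
  obtain ⟨b, hb⟩ := hr y hy
  exact mem_iUnion.2 ⟨b, hy, hb⟩

theorem exists_countable_dense_sequences (e : X → ℕ → β) (Y : Set X) :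
    ∃ D ⊆ Y, D.Countable ∧ ∀ y ∈ Y, ∀ N, ∃ d ∈ D, EqOn (e d) (e y) (Iio N) := by
  have hstem : ∀ p : Σ N : ℕ, Fin N → β, ∃ D ⊆ Y, D.Countable ∧
      ∀ y ∈ Y, (fun i : Fin p.1 => e y i) = p.2 → ∃ d ∈ D, (fun i : Fin p.1 => e d i) = p.2 := by
    rintro ⟨N, t⟩
    by_cases h : ∃ y ∈ Y, (fun i : Fin N => e y i) = t
    · obtain ⟨y, hy, hyt⟩ := h
      exact ⟨{y}, singleton_subset_iff.2 hy, countable_singleton y, fun _ _ _ => ⟨y, rfl, hyt⟩⟩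
    · exact ⟨∅, empty_subset Y, countable_empty, fun y hy hyt => (h ⟨y, hy, hyt⟩).elim⟩
  choose D hDY hDc hD using hstem
  refine ⟨⋃ p, D p, iUnion_subset hDY, countable_iUnion hDc, fun y hy N => ?_⟩
  obtain ⟨d, hd, h⟩ := hD ⟨N, fun i => e y i⟩ y hy rfl
  exact ⟨d, mem_iUnion.2 ⟨_, hd⟩, fun i hi => congrFun h ⟨i, hi⟩⟩

end Countability

theorem OpenColoringAxiom.dichotomy_of_coding (hOCA : OpenColoringAxiom) {X β : Type} [Countable β]
    {e : X → ℕ → β} (he : Injective e) {R : X → X → Prop} (hsymm : ∀ a b, R a b → R b a)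
    (hirrefl : ∀ a, ¬ R a a)
    (hopen : ∀ a b, R a b → ∃ N : ℕ, ∀ a' b',
      EqOn (e a') (e a) (Iio N) → EqOn (e b') (e b) (Iio N) → R a' b') :
    (∃ Y : Set X, ¬ Y.Countable ∧ Y.Pairwise R) ∨
    (∃ Z : ℕ → Set X, ⋃ n, Z n = univ ∧ ∀ n, (Z n).Pairwise fun a b => ¬ R a b) := by
  let : TopologicalSpace β := ⊥
  have : DiscreteTopology β := ⟨rfl⟩
  let : TopologicalSpace X := TopologicalSpace.induced e inferInstance
  have hemb : Topology.IsEmbedding e := ⟨⟨rfl⟩, he⟩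
  have : SecondCountableTopology X := hemb.secondCountableTopology
  have : TopologicalSpace.MetrizableSpace X := hemb.metrizableSpace
  let := TopologicalSpace.metrizableSpaceMetric X
  have hnhds : ∀ (a : X) (N : ℕ), {a' | EqOn (e a') (e a) (Iio N)} ∈ nhds a := by
    intro a N
    have hinter : {a' | EqOn (e a') (e a) (Iio N)} = ⋂ i ∈ Iio N, {a' | e a' i = e a i} := by
      ext; simp [EqOn]
    rw [hinter]
    refine (biInter_mem (finite_Iio N)).2 fun i _ => ?_
    have hcont : Continuous fun a' => e a' i := (continuous_apply i).comp hemb.continuous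
    exact (hcont.isOpen_preimage {e a i} (isOpen_discrete _)).mem_nhds rfl
  have hK : IsOpen {p : X × X | R p.1 p.2} := by
    rw [isOpen_iff_mem_nhds]
    rintro ⟨a, b⟩ hab
    obtain ⟨N, hN⟩ := hopen a b hab
    rw [nhds_prod_eq]
    filter_upwards [prod_mem_prod (hnhds a N) (hnhds b N)] with p hp
    exact hN p.1 p.2 hp.1 hp.2
  exact hOCA X inferInstance {p | R p.1 p.2} hK (fun p hp => hsymm _ _ hp) hirrefl

/-! ### Uncountable families of functions have uncountable bounded subfamilies -/

theorem exists_monotone_dominating {S : Set (ℕ → ℕ)} (hS : S.Countable) (φ : ℕ → ℕ) :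
    ∃ b : ℕ → ℕ, Monotone b ∧ φ ≤ b ∧ ∀ s ∈ S, ∀ᶠ n in atTop, s n < b n := by
  have hbdd : ∃ h : ℕ → ℕ, ∀ s ∈ S, ∀ᶠ n in atTop, s n ≤ h n := by
    rcases S.eq_empty_or_nonempty with rfl | hne
    · exact ⟨0, by simp⟩
    obtain ⟨s, rfl⟩ := hS.exists_eq_range hne
    refine ⟨fun n => ∑ j ∈ Finset.range (n + 1), s j n, forall_mem_range.2 fun j => ?_⟩
    filter_upwards [eventually_ge_atTop j] with n hn
    exact Finset.single_le_sum (f := fun j => s j n) (fun _ _ => Nat.zero_le _)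
      (Finset.mem_range_succ_iff.2 hn)
  obtain ⟨h, hh⟩ := hbdd
  have hle := le_partialSups fun n => φ n + h n + 1
  refine ⟨partialSups fun n => φ n + h n + 1, (partialSups _).monotone, fun n => ?_,
    fun s hs => ?_⟩
  · have := hle n
    dsimp only at this
    lia
  · filter_upwards [hh s hs] with n hn
    have := hle n
    dsimp only at this
    lia

theorem exists_unbounded_coordinate_of_not_bddAbove {S : Set (ℕ → ℕ)} (hS : ¬ BddAbove S) :
    ∃ s ∈ S, ∃ N, ∀ M, ∃ t ∈ S, EqOn t s (Iio N) ∧ M ≤ t N := by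
  by_contra! hbdd
  refine hS (bddAbove_pi.2 fun N => ?_)
  induction N using Nat.strong_induction_on with
  | _ N ih =>
    have hstems : ((fun s (i : Iio N) => s i) '' S).Finite := by
      refine BddAbove.finite (bddAbove_pi.2 fun i => ?_)
      simpa only [image_image, eval] using ih i i.2
    have hstem : ∀ t ∈ (fun s (i : Iio N) => s i) '' S,
        BddAbove (eval N '' {s ∈ S | (fun i : Iio N => s i) = t}) := by
      rintro _ ⟨s, hs, rfl⟩
      obtain ⟨M, hM⟩ := hbdd s hs N
      refine ⟨M, forall_mem_image.2 fun t ht => (hM t ht.1 fun i hi => ?_).le⟩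
      exact congrFun ht.2 ⟨i, hi⟩
    refine ((hstems.bddAbove_biUnion).2 hstem).mono (image_subset_iff.2 fun s hs => ?_)
    exact mem_biUnion (mem_image_of_mem _ hs) (mem_image_of_mem _ ⟨hs, rfl⟩)

theorem exists_omegaOne_like : ∃ (ι : Type) (_ : LinearOrder ι) (_ : WellFoundedLT ι),
    Uncountable ι ∧ (∀ a : ι, (Iio a).Countable) ∧
    ∀ {X : Type} {Y : Set X}, ¬ Y.Countable → ∃ j : ι → X, Injective j ∧ ∀ a, j a ∈ Y := by
  refine ⟨(Cardinal.aleph 1).ord.ToType, inferInstance, inferInstance, ?_, fun a => ?_,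
    fun {X Y} hY => ?_⟩
  · rw [← Cardinal.aleph0_lt_mk_iff, Cardinal.mk_ord_toType]
    exact Cardinal.aleph0_lt_aleph_one
  · exact Cardinal.le_aleph0_iff_set_countable.1
      (Cardinal.lt_aleph_one_iff.1 (by simpa using Cardinal.mk_Iio_lt a (by simp)))
  · have hle : Cardinal.mk (Cardinal.aleph 1).ord.ToType ≤ Cardinal.mk Y := by
      rw [Cardinal.mk_ord_toType, Cardinal.aleph_one_le_iff]
      exact not_le.1 fun h => hY (Cardinal.le_aleph0_iff_set_countable.1 h)
    obtain ⟨g⟩ := hle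
    exact ⟨fun a => g a, Subtype.val_injective.comp g.injective, fun a => (g a).2⟩

/-- A scale: a family of monotone functions which is strictly increasing with respect to eventual
domination. -/
structure IsScale {ι : Type*} [LT ι] (ψ : ι → ℕ → ℕ) : Prop where
  monotone : ∀ a, Monotone (ψ a)
  eventually_lt : ∀ ⦃a b⦄, a < b → ∀ᶠ n in atTop, ψ a n < ψ b n

section Scale

variable {ι : Type} [LinearOrder ι]

theorem exists_isScale_ge [WellFoundedLT ι] (hι : ∀ a : ι, (Iio a).Countable)
    (φ : ι → ℕ → ℕ) : ∃ ψ, IsScale ψ ∧ φ ≤ ψ := by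
  have hnext : ∀ (a : ι) (prev : (b : ι) → b < a → ℕ → ℕ), ∃ f : ℕ → ℕ, Monotone f ∧ φ a ≤ f ∧
      ∀ b (h : b < a), ∀ᶠ n in atTop, prev b h n < f n := by
    intro a prev
    have : Countable (Iio a) := (hι a).to_subtype
    obtain ⟨f, hf, hφ, hlt⟩ :=
      exists_monotone_dominating (countable_range fun b : Iio a => prev b.1 b.2) (φ a)
    exact ⟨f, hf, hφ, fun b h => hlt _ ⟨⟨b, h⟩, rfl⟩⟩
  choose next hnext using hnext
  have hwf : WellFounded ((· < ·) : ι → ι → Prop) := wellFounded_lt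
  have hfix : ∀ a, Monotone (hwf.fix next a) ∧ φ a ≤ hwf.fix next a ∧
      ∀ b < a, ∀ᶠ n in atTop, hwf.fix next b n < hwf.fix next a n := by
    intro a
    have := hnext a fun b _ => hwf.fix next b
    rwa [← hwf.fix_eq next] at this
  exact ⟨hwf.fix next, ⟨fun a => (hfix a).1, fun a b h => (hfix b).2.2 a h⟩, fun a => (hfix a).2.1⟩

theorem exists_mem_forall_lt (hι : ∀ a : ι, (Iio a).Countable) {Z D : Set ι}
    (hZ : ¬ Z.Countable) (hD : D.Countable) : ∃ c ∈ Z, ∀ d ∈ D, d < c := by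
  by_contra! h
  have hIic : ∀ d : ι, (Iic d).Countable := fun d => by
    rw [← Iio_insert]
    exact (hι d).insert d
  refine hZ ((hD.biUnion fun d _ => hIic d).mono fun c hc => ?_)
  obtain ⟨d, hd, hcd⟩ := h c hc
  exact mem_biUnion hd hcd

theorem IsScale.not_le_of_lt {ψ : ι → ℕ → ℕ} (hψ : IsScale ψ) {a b : ι} (h : a < b) :
    ¬ ψ b ≤ ψ a := fun hle =>
  let ⟨n, hn⟩ := (hψ.eventually_lt h).exists
  (hle n).not_gt hn

theorem IsScale.injective {ψ : ι → ℕ → ℕ} (hψ : IsScale ψ) : Injective ψ :=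
  .of_lt_imp_ne fun _ _ h heq => hψ.not_le_of_lt h heq.ge

theorem IsScale.bddAbove_of_pairwise_comparable (hι : ∀ a : ι, (Iio a).Countable)
    {ψ : ι → ℕ → ℕ} (hψ : IsScale ψ) {Z : Set ι} (hZ : ¬ Z.Countable)
    (hcomp : Z.Pairwise fun a b => ψ a ≤ ψ b ∨ ψ b ≤ ψ a) : BddAbove (ψ '' Z) := by
  obtain ⟨D, hDZ, hDc, hD⟩ := exists_countable_dense_sequences ψ Z
  obtain ⟨c, hc, hDc⟩ := exists_mem_forall_lt hι hZ hDc
  refine ⟨ψ c, forall_mem_image.2 fun a ha i => ?_⟩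
  obtain ⟨d, hd, hda⟩ := hD a ha (i + 1)
  rw [← hda (Nat.lt_succ_self i)]
  exact (hcomp (hDZ hd) hc (hDc d hd).ne).resolve_right (hψ.not_le_of_lt (hDc d hd)) i

theorem IsScale.exists_le_of_forall_bddAbove_countable (hι : ∀ a : ι, (Iio a).Countable)
    {ψ : ι → ℕ → ℕ} (hψ : IsScale ψ) (hbdd : ∀ Z, BddAbove (ψ '' Z) → Z.Countable)
    {Y : Set ι} (hY : ¬ Y.Countable) : ∃ a ∈ Y, ∃ b ∈ Y, a ≠ b ∧ ψ a ≤ ψ b := by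
  obtain ⟨D, hDY, hDc, hD⟩ := exists_countable_dense_sequences ψ Y
  obtain ⟨c, -, hDc⟩ := exists_mem_forall_lt hι hY hDc
  have habove : ¬ {a ∈ Y | c < a}.Countable := fun h =>
    let ⟨a, haY, ha⟩ := exists_mem_forall_lt hι hY (h.insert c)
    (ha a (mem_insert_of_mem c ⟨haY, ha c (mem_insert c _)⟩)).false
  obtain ⟨n, hn⟩ := exists_not_countable_sep habove
    fun a ha => eventually_atTop.1 (hψ.eventually_lt ha.2)
  obtain ⟨_, ⟨a, ha, rfl⟩, N, hN⟩ :=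
    exists_unbounded_coordinate_of_not_bddAbove fun h => hn (hbdd _ h)
  obtain ⟨d, hd, hda⟩ := hD a ha.1.1 N
  obtain ⟨k, hk⟩ := eventually_atTop.1 (hψ.eventually_lt (hDc d hd))
  -- `b` copies `ψ d` below `N`, jumps above `ψ c` there, and dominates `ψ c` from `n` on.
  obtain ⟨_, ⟨b, hb, rfl⟩, hba, hM⟩ := hN (ψ c (k + n + N))
  refine ⟨d, hDY hd, b, hb.1.1, ((hDc d hd).trans hb.1.2).ne, fun i => ?_⟩
  rcases lt_or_ge i N with hi | hi
  · rw [hda hi, hba hi]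
  rcases le_total i (k + n + N) with hi' | hi'
  · calc ψ d i ≤ ψ d (k + n + N) := hψ.monotone d hi'
      _ ≤ ψ c (k + n + N) := (hk _ (by lia)).le
      _ ≤ ψ b N := hM
      _ ≤ ψ b i := hψ.monotone b hi
  · exact ((hk i (by lia)).trans (hb.2 i (by lia))).le

theorem IsScale.exists_not_countable_bddAbove (hOCA : OpenColoringAxiom) [Uncountable ι]
    (hι : ∀ a : ι, (Iio a).Countable) {ψ : ι → ℕ → ℕ} (hψ : IsScale ψ) :
    ∃ Z : Set ι, ¬ Z.Countable ∧ BddAbove (ψ '' Z) := by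
  by_contra! hbdd
  rcases hOCA.dichotomy_of_coding hψ.injective (R := fun a b => ¬ ψ a ≤ ψ b ∧ ¬ ψ b ≤ ψ a)
    (fun a b h => h.symm) (fun a h => h.1 le_rfl) (by
      rintro a b ⟨hab, hba⟩
      simp only [Pi.le_def, not_forall] at hab hba
      obtain ⟨x, hx⟩ := hab
      obtain ⟨y, hy⟩ := hba
      refine ⟨x + y + 1, fun a' b' ha hb => ⟨fun h => hx ?_, fun h => hy ?_⟩⟩
      · rw [← @ha x (by grind), ← @hb x (by grind)]
        exact h x
      · rw [← @ha y (by grind), ← @hb y (by grind)]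
        exact h y) with ⟨Y, hY, hanti⟩ | ⟨Z, hcov, hZ⟩
  · obtain ⟨a, ha, b, hb, hne, hle⟩ := hψ.exists_le_of_forall_bddAbove_countable hι
      (fun Z hZ => by_contra fun h => hbdd Z h hZ) hY
    exact (hanti ha hb hne).1 hle
  · have hex : ∃ n, ¬ (Z n).Countable := by
      by_contra! h
      exact not_countable_univ (α := ι) (hcov ▸ countable_iUnion h)
    obtain ⟨n, hn⟩ := hex
    exact hbdd _ hn (hψ.bddAbove_of_pairwise_comparable hι hn
      ((hZ n).mono' fun a b h => by tauto))

end Scale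

theorem OpenColoringAxiom.exists_not_countable_bddAbove (hOCA : OpenColoringAxiom) {X : Type}
    {Y : Set X} (hY : ¬ Y.Countable) (φ : X → ℕ → ℕ) :
    ∃ Y' ⊆ Y, ¬ Y'.Countable ∧ BddAbove (φ '' Y') := by
  obtain ⟨ι, _, _, _, hι, hembed⟩ := exists_omegaOne_like
  obtain ⟨j, hj, hjY⟩ := hembed hY
  obtain ⟨ψ, hψ, hle⟩ := exists_isScale_ge hι fun a => φ (j a)
  obtain ⟨Z, hZ, f, hf⟩ := hψ.exists_not_countable_bddAbove hOCA hι
  refine ⟨j '' Z, image_subset_iff.2 fun a _ => hjY a,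
    fun h => hZ (countable_of_injective_of_countable_image hj.injOn h), f, ?_⟩
  rintro _ ⟨_, ⟨a, ha, rfl⟩, rfl⟩
  exact (hle a).trans (hf (mem_image_of_mem ψ ha))

/-! ### Baire category for sets of natural numbers -/

/-- The sets `P` and `Q` have the same elements below `l`, that is, they have the same stem of
length `l` when regarded as points of the Cantor space. -/
def AgreeBelow (l : ℕ) (P Q : Set ℕ) : Prop := ∀ i < l, (i ∈ P ↔ i ∈ Q)

section AgreeBelow

variable {l : ℕ} {P P' Q Q' R : Set ℕ}

theorem AgreeBelow.refl (l : ℕ) (P : Set ℕ) : AgreeBelow l P P := fun _ _ => Iff.rfl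

theorem AgreeBelow.symm (h : AgreeBelow l P Q) : AgreeBelow l Q P := fun i hi => (h i hi).symm

theorem AgreeBelow.trans (h : AgreeBelow l P Q) (h' : AgreeBelow l Q R) : AgreeBelow l P R :=
  fun i hi => (h i hi).trans (h' i hi)

theorem AgreeBelow.union (h : AgreeBelow l P Q) (h' : AgreeBelow l P' Q') :
    AgreeBelow l (P ∪ P') (Q ∪ Q') := fun i hi => or_congr (h i hi) (h' i hi)

theorem AgreeBelow.inter (h : AgreeBelow l P Q) (h' : AgreeBelow l P' Q') :
    AgreeBelow l (P ∩ P') (Q ∩ Q') := fun i hi => and_congr (h i hi) (h' i hi)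

end AgreeBelow

/-- The closure of a family of sets in the topology of the Cantor space. -/
def agreeClosure (S : Set (Set ℕ)) : Set (Set ℕ) := {P | ∀ l, ∃ Q ∈ S, AgreeBelow l Q P}

theorem exists_stem_of_iUnion_eq_univ {ι β : Type*} [Countable ι] [Finite β] [Nonempty β]
    {Y : ι → Set (ℕ → β)} (hY : ⋃ c, Y c = univ) : ∃ c r l, ∀ p : ℕ → β, EqOn p r (Iio l) →
      ∀ l', ∃ q ∈ Y c, EqOn q p (Iio l') := by
  let : TopologicalSpace β := ⊥
  have : DiscreteTopology β := ⟨rfl⟩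
  obtain ⟨c, r, hr⟩ := nonempty_interior_of_iUnion_of_closed (f := fun c => closure (Y c))
    (fun c => isClosed_closure) (univ_subset_iff.1 (hY ▸ iUnion_mono fun c => subset_closure))
  obtain ⟨_, ⟨r, l, rfl⟩, -, hsub⟩ := (PiNat.isTopologicalBasis_cylinders fun _ => β)
    |>.exists_subset_of_mem_open hr isOpen_interior
  refine ⟨c, r, l, fun p hp l' => ?_⟩
  obtain ⟨q, hqp, hq⟩ := mem_closure_iff.1 (interior_subset (hsub hp)) (PiNat.cylinder p l')
    (PiNat.isOpen_cylinder _ p l') (PiNat.self_mem_cylinder p l')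
  exact ⟨q, hq, hqp⟩

theorem exists_stem_pair_of_cover {ι : Type*} [Countable ι] {A : Set ℕ}
    {Y : ι → Set (Set ℕ × Set ℕ)} (hY : ∀ P ⊆ A, ∀ Q ⊆ A, ∃ c, (P, Q) ∈ Y c) :
    ∃ c, ∃ r ⊆ A, ∃ s ⊆ A, ∃ l, ∀ P ⊆ A, ∀ Q ⊆ A, AgreeBelow l P r → AgreeBelow l Q s →
      ∀ l', ∃ P' ⊆ A, ∃ Q' ⊆ A, (P', Q') ∈ Y c ∧ AgreeBelow l' P' P ∧ AgreeBelow l' Q' Q := by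
  let sets (p : ℕ → Prop × Prop) : Set ℕ × Set ℕ := (A ∩ {i | (p i).1}, A ∩ {i | (p i).2})
  obtain ⟨c, r, l, h⟩ := exists_stem_of_iUnion_eq_univ (Y := fun c => sets ⁻¹' Y c)
    (eq_univ_of_forall fun p => mem_iUnion.2 (hY _ inter_subset_left _ inter_subset_left))
  refine ⟨c, (sets r).1, inter_subset_left, (sets r).2, inter_subset_left, l,
    fun P hP Q hQ hPr hQr l' => ?_⟩
  obtain ⟨q, hq, hagree⟩ := h
    (fun i => ((i ∈ A ∧ i ∈ P ∨ i ∉ A ∧ (r i).1), (i ∈ A ∧ i ∈ Q ∨ i ∉ A ∧ (r i).2)))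
    (fun i hi => by have := hPr i hi; have := hQr i hi; grind) l'
  refine ⟨_, inter_subset_left, _, inter_subset_left, hq, fun i hi => ?_, fun i hi => ?_⟩ <;>
    have := hagree hi <;> grind

theorem exists_stem_of_cover {ι : Type*} [Countable ι] {A : Set ℕ} {Y : ι → Set (Set ℕ)}
    (hY : ∀ P ⊆ A, ∃ c, P ∈ Y c) :
    ∃ c, ∃ r ⊆ A, ∃ l, ∀ P ⊆ A, AgreeBelow l P r → P ∈ agreeClosure {Q ∈ Y c | Q ⊆ A} := by
  obtain ⟨c, r, hr, s, hs, l, h⟩ := exists_stem_pair_of_cover (Y := fun c => Prod.fst ⁻¹' Y c)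
    fun P hP _ _ => hY P hP
  refine ⟨c, r, hr, l, fun P hP hPr l' => ?_⟩
  obtain ⟨P', hP', _, _, hmem, hagree, -⟩ := h P hP s hs hPr (.refl l s) l'
  exact ⟨P', ⟨hmem, hP'⟩, hagree⟩

/-- The union of the intervals `[l j, l (j + 1))` with `j ∈ J`. -/
def blocks (l : ℕ → ℕ) (J : Set ℕ) : Set ℕ := ⋃ j ∈ J, Ico (l j) (l (j + 1))

section Blocks

variable {l : ℕ → ℕ}

theorem eq_of_mem_Ico_succ (hl : Monotone l) {i j k : ℕ} (hj : i ∈ Ico (l j) (l (j + 1)))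
    (hk : i ∈ Ico (l k) (l (k + 1))) : j = k :=
  hl.pairwise_disjoint_on_Ico_succ.eq (not_disjoint_iff.2 ⟨i, hj, hk⟩)

theorem exists_mem_Ico_succ (hl : StrictMono l) (h0 : l 0 = 0) (i : ℕ) :
    ∃ j, i ∈ Ico (l j) (l (j + 1)) := by
  have hcov := iUnion_Ico_map_succ_eq_Ici (fun a => hl.monotone bot_le)
    (hl.not_bddAbove_range_of_isSuccArchimedean)
  have : i ∈ ⋃ j, Ico (l j) (l (Order.succ j)) := hcov ▸ h0.le.trans i.zero_le
  exact mem_iUnion.1 this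

theorem mem_blocks_iff (hl : Monotone l) {J : Set ℕ} {i j : ℕ}
    (hi : i ∈ Ico (l j) (l (j + 1))) : i ∈ blocks l J ↔ j ∈ J := by
  simp only [blocks, mem_iUnion₂, exists_prop]
  exact ⟨fun ⟨k, hk, hik⟩ => eq_of_mem_Ico_succ hl hi hik ▸ hk, fun hj => ⟨j, hj, hi⟩⟩

theorem blocks_compl (hl : StrictMono l) (h0 : l 0 = 0) (J : Set ℕ) :
    blocks l Jᶜ = (blocks l J)ᶜ := by
  ext i
  obtain ⟨j, hj⟩ := exists_mem_Ico_succ hl h0 i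
  simp only [mem_compl_iff, mem_blocks_iff hl.monotone hj]

end Blocks

theorem exists_block_forces {D : Set (Set ℕ)} (hD : ∀ s l, ∃ t l', AgreeBelow l t s ∧
    ∀ w, AgreeBelow l' w t → w ∈ D) (l : ℕ) :
    ∃ l' > l, ∃ u : Set ℕ, ∀ w : Set ℕ, (∀ i ∈ Ico l l', i ∈ w ↔ i ∈ u) → w ∈ D := by
  suffices hfin : ∀ T : Set (Set ℕ), T.Finite → ∃ l' > l, ∃ u : Set ℕ, ∀ p ∈ T, ∀ w,
      AgreeBelow l w p → (∀ i ∈ Ico l l', i ∈ w ↔ i ∈ u) → w ∈ D by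
    obtain ⟨l', hl', u, hu⟩ := hfin (𝒫 (Iio l)) (finite_Iio l).powerset
    exact ⟨l', hl', u, fun w hw =>
      hu (w ∩ Iio l) inter_subset_right w (fun i hi => by simp [hi]) hw⟩
  intro T hT
  induction T, hT using Set.Finite.induction_on with
  | empty => exact ⟨l + 1, l.lt_succ_self, ∅, fun p hp => hp.elim⟩
  | @insert p T _ _ ih =>
    obtain ⟨l₁, hl₁, u, hu⟩ := ih
    obtain ⟨t, l₂, hts, ht⟩ := hD ({i ∈ p | i < l} ∪ {i ∈ u | l ≤ i}) l₁
    refine ⟨max l₁ l₂, hl₁.trans_le (le_max_left l₁ l₂), t, forall_mem_insert.2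
      ⟨fun w hwp hw => ht w fun i hi => ?_, fun q hq w hwq hw => hu q hq w hwq fun i hi => ?_⟩⟩
    · by_cases hil : i < l
      · rw [hwp i hil, hts i (hil.trans hl₁)]
        simp [hil, hil.not_ge]
      · exact hw i ⟨not_lt.1 hil, hi.trans_le (le_max_right l₁ l₂)⟩
    · rw [hw i ⟨hi.1, hi.2.trans_le (le_max_left l₁ l₂)⟩, hts i hi.2]
      simp [hi.1, hi.1.not_gt]

/-- Talagrand's description of comeagre subsets of the Cantor space. -/
theorem exists_blocks_forces {D : ℕ → Set (Set ℕ)} (hanti : Antitone D)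
    (hD : ∀ c s l, ∃ t l', AgreeBelow l t s ∧ ∀ w, AgreeBelow l' w t → w ∈ D c) :
    ∃ l : ℕ → ℕ, StrictMono l ∧ l 0 = 0 ∧ ∃ u : Set ℕ, ∀ w : Set ℕ,
      (∃ᶠ j in atTop, ∀ i ∈ Ico (l j) (l (j + 1)), i ∈ w ↔ i ∈ u) → ∀ c, w ∈ D c := by
  choose next hnext v hv using fun c => exists_block_forces (hD c)
  let l : ℕ → ℕ := fun n => n.rec 0 next
  have hl : StrictMono l := strictMono_nat_of_lt_succ fun c => hnext c (l c)
  refine ⟨l, hl, rfl, {i | ∃ j, i ∈ Ico (l j) (l (j + 1)) ∧ i ∈ v j (l j)}, fun w hw c => ?_⟩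
  obtain ⟨j, hj, hwj⟩ := hw.forall_exists_of_atTop c
  refine hanti hj (hv j (l j) w fun i hi => (hwj i hi).trans
    ⟨fun ⟨k, hk, hik⟩ => eq_of_mem_Ico_succ hl.monotone hi hk ▸ hik, fun hij => ⟨j, hi, hij⟩⟩)

/-! ### Homomorphisms modulo finite sets -/

/-- A lifting of a homomorphism of Boolean algebras from the measurable subsets of `α` to
`𝒫(ℕ)/fin`. -/
structure IsAlmostHom {α : Type*} [MeasurableSpace α] (Φ : Set α → Set ℕ) : Prop where
  union : ∀ A B : Set α, (_ : MeasurableSet A := by measurability) →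
    (_ : MeasurableSet B := by measurability) →
    ∀ᶠ m in atTop, m ∈ Φ (A ∪ B) ↔ m ∈ Φ A ∨ m ∈ Φ B
  compl : ∀ A : Set α, (_ : MeasurableSet A := by measurability) →
    ∀ᶠ m in atTop, m ∈ Φ Aᶜ ↔ m ∉ Φ A

theorem eventually_mem_iff_of_finite_symmDiff {S T : Set ℕ} (h : (symmDiff S T).Finite) :
    ∀ᶠ m in atTop, m ∈ S ↔ m ∈ T := by
  rw [← Nat.cofinite_eq_atTop]
  filter_upwards [h.compl_mem_cofinite] with m hm
  rw [mem_compl_iff, mem_symmDiff] at hm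
  tauto

theorem IsAlmostHom.of_finite_symmDiff {α : Type*} [MeasurableSpace α] {Φ : Set α → Set ℕ}
    (hunion : ∀ A B, MeasurableSet A → MeasurableSet B →
      (symmDiff (Φ (A ∪ B)) (Φ A ∪ Φ B)).Finite)
    (hcompl : ∀ A, MeasurableSet A → (symmDiff (Φ Aᶜ) (Φ A)ᶜ).Finite) : IsAlmostHom Φ where
  union A B hA hB := eventually_mem_iff_of_finite_symmDiff (hunion A B hA hB)
  compl A hA := eventually_mem_iff_of_finite_symmDiff (hcompl A hA)

namespace IsAlmostHom

variable {α β : Type*} [MeasurableSpace α] [MeasurableSpace β] {Φ : Set α → Set ℕ}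

theorem inter (hΦ : IsAlmostHom Φ) (A B : Set α) (hA : MeasurableSet A := by measurability)
    (hB : MeasurableSet B := by measurability) :
    ∀ᶠ m in atTop, m ∈ Φ (A ∩ B) ↔ m ∈ Φ A ∧ m ∈ Φ B := by
  filter_upwards [hΦ.compl (Aᶜ ∪ Bᶜ), hΦ.union Aᶜ Bᶜ, hΦ.compl A, hΦ.compl B]
    with m h hunion hA hB
  rw [← compl_inter, compl_compl] at h
  rw [h, compl_inter, hunion, hA, hB, not_or, not_not, not_not]

theorem empty (hΦ : IsAlmostHom Φ) : ∀ᶠ m in atTop, m ∉ Φ ∅ := by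
  filter_upwards [hΦ.compl ∅, hΦ.union ∅ ∅ᶜ] with m hcompl hunion
  rw [empty_union] at hunion
  tauto

theorem mono (hΦ : IsAlmostHom Φ) {A B : Set α} (h : A ⊆ B)
    (hA : MeasurableSet A := by measurability) (hB : MeasurableSet B := by measurability) :
    ∀ᶠ m in atTop, m ∈ Φ A → m ∈ Φ B := by
  filter_upwards [hΦ.union A B] with m hm hmA
  rw [union_eq_self_of_subset_left h] at hm
  exact hm.2 (.inl hmA)

theorem disjoint (hΦ : IsAlmostHom Φ) {A B : Set α} (h : Disjoint A B)
    (hA : MeasurableSet A := by measurability) (hB : MeasurableSet B := by measurability) :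
    ∀ᶠ m in atTop, m ∈ Φ A → m ∉ Φ B := by
  filter_upwards [hΦ.inter A B, hΦ.empty] with m hm hempty hmA hmB
  rw [h.inter_eq] at hm
  exact hempty (hm.2 ⟨hmA, hmB⟩)

theorem comp_preimage (hΦ : IsAlmostHom Φ) {f : α → β} (hf : Measurable f) :
    IsAlmostHom fun U => Φ (f ⁻¹' U) :=
  ⟨fun _ _ hU hV => hΦ.union _ _ (hf hU) (hf hV), fun _ hU => hΦ.compl _ (hf hU)⟩

end IsAlmostHom

/-- `F` is trivial on `A` if, modulo finite sets, it maps the subsets of `A` to their preimages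
under a partial function on `ℕ` with domain `F A`. -/
def TrivialOn (F : Set ℕ → Set ℕ) (A : Set ℕ) : Prop :=
  ∃ g : ℕ → ℕ, ∀ P ⊆ A, ∀ᶠ m in atTop, m ∈ F P ↔ m ∈ F A ∧ g m ∈ P

namespace TrivialOn

variable {F : Set ℕ → Set ℕ} {A B : Set ℕ}

theorem mono (h : TrivialOn F B) (hAB : A ⊆ B) : TrivialOn F A := by
  obtain ⟨g, hg⟩ := h
  refine ⟨g, fun P hP => ?_⟩
  filter_upwards [hg P (hP.trans hAB), hg A hAB] with m hmP hmA
  rw [hmP, hmA]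
  exact ⟨fun h => ⟨⟨h.1, hP h.2⟩, h.2⟩, fun h => ⟨h.1.1, h.2⟩⟩

theorem union_of_disjoint (hF : IsAlmostHom F) (hA : TrivialOn F A) (hB : TrivialOn F B)
    (hAB : Disjoint A B) : TrivialOn F (A ∪ B) := by
  classical
  obtain ⟨gA, hgA⟩ := hA
  obtain ⟨gB, hgB⟩ := hB
  refine ⟨fun m => if m ∈ F A then gA m else gB m, fun P hP => ?_⟩
  have hsplit : P ∩ A ∪ P ∩ B = P := by
    rw [← inter_union_distrib_left, inter_eq_left.2 hP]
  filter_upwards [hgA (P ∩ A) inter_subset_right, hgB (P ∩ B) inter_subset_right,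
    hF.union (P ∩ A) (P ∩ B), hF.union A B, hF.disjoint hAB, hgA A subset_rfl, hgB B subset_rfl]
    with m hPA hPB hP hunion hdisj hA hB
  rw [hsplit] at hP
  rw [hP, hunion, hPA, hPB]
  by_cases hm : m ∈ F A
  · simp [hm, hdisj hm, (hA.1 hm).2]
  · simp only [hm, if_false, false_and, false_or, mem_inter_iff]
    exact and_congr_right fun hmB => and_iff_left (hB.1 hmB).2

theorem union (hF : IsAlmostHom F) (hA : TrivialOn F A) (hB : TrivialOn F B) :
    TrivialOn F (A ∪ B) := by
  rw [← union_sdiff_self]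
  exact union_of_disjoint hF hA (hB.mono sdiff_subset) disjoint_sdiff_right

theorem of_finite (hF : IsAlmostHom F) (hA : A.Finite) : TrivialOn F A := by
  induction A, hA using Set.Finite.induction_on with
  | empty =>
    refine ⟨id, fun P hP => ?_⟩
    filter_upwards [hF.empty] with m hm
    simp [subset_empty_iff.1 hP, hm]
  | @insert a s _ _ ih =>
    rw [insert_eq]
    refine union hF ⟨fun _ => a, fun P hP => ?_⟩ ih
    rcases subset_singleton_iff_eq.1 hP with rfl | rfl
    · filter_upwards [hF.empty] with m hm
      simp [hm]
    · simp

end TrivialOn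

/-! ### Continuous liftings are trivial -/

/-- `ψ` represents the same homomorphism as `F` on the subsets of `A`, and each of its coordinates
`P ↦ (m ∈ ψ P)` is continuous. -/
structure IsContinuousLift (F ψ : Set ℕ → Set ℕ) (A : Set ℕ) : Prop where
  eventually_iff : ∀ P ⊆ A, ∀ᶠ m in atTop, m ∈ ψ P ↔ m ∈ F P
  continuous : ∀ m, ∃ l, ∀ P ⊆ A, ∀ Q ⊆ A, AgreeBelow l P Q → (m ∈ ψ P ↔ m ∈ ψ Q)

theorem exists_forall_iff_mem_of_hom {θ : Set ℕ → Prop} {A : Set ℕ}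
    (hunion : ∀ P ⊆ A, ∀ Q ⊆ A, θ (P ∪ Q) ↔ θ P ∨ θ Q)
    (hinter : ∀ P ⊆ A, ∀ Q ⊆ A, θ (P ∩ Q) ↔ θ P ∧ θ Q) (hempty : ¬ θ ∅)
    (hcont : ∃ l, ∀ P ⊆ A, ∀ Q ⊆ A, AgreeBelow l P Q → (θ P ↔ θ Q)) :
    ∃ a, ∀ P ⊆ A, θ P ↔ θ A ∧ a ∈ P := by
  have hmono : ∀ P ⊆ A, ∀ Q ⊆ A, P ⊆ Q → θ P → θ Q := fun P hP Q hQ h hθ => by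
    rw [← union_eq_self_of_subset_left h, hunion P hP Q hQ]
    exact .inl hθ
  by_cases hA : θ A
  swap
  · exact ⟨0, fun P hP =>
      ⟨fun h => (hA (hmono P hP A subset_rfl hP h)).elim, fun h => (hA h.1).elim⟩⟩
  obtain ⟨l, hl⟩ := hcont
  have hfin : ∀ D : Set ℕ, D.Finite → D ⊆ A → θ D → ∃ a ∈ D, θ {a} := by
    intro D hD
    induction D, hD using Set.Finite.induction_on with
    | empty => exact fun _ h => (hempty h).elim
    | @insert d D _ _ ih =>
      rw [insert_subset_iff, insert_eq]
      rintro ⟨hd, hD⟩ hθ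
      rcases (hunion {d} (singleton_subset_iff.2 hd) D hD).1 hθ with h | h
      · exact ⟨d, .inl rfl, h⟩
      · obtain ⟨a, ha, hθa⟩ := ih hD h
        exact ⟨a, .inr ha, hθa⟩
  obtain ⟨a, ha, hθa⟩ := hfin (A ∩ Iio l) ((finite_Iio l).inter_of_right A) inter_subset_left
    ((hl A subset_rfl _ inter_subset_left fun i hi => by simp [hi]).1 hA)
  have haA : {a} ⊆ A := singleton_subset_iff.2 ha.1
  refine ⟨a, fun P hP => ⟨fun hθ => ⟨hA, by_contra fun haP => hempty ?_⟩, fun h =>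
    hmono _ haA P hP (singleton_subset_iff.2 h.2) hθa⟩⟩
  rw [← singleton_inter_eq_empty.2 haP]
  exact (hinter _ haA P hP).2 ⟨hθa, hθ⟩

theorem union_and_inter_iff_of_coupled {A : Set ℕ} {θ θ₁ θ₂ κ : Set ℕ → Prop}
    (hunion : ∀ P ⊆ A, ∀ Q ⊆ A, θ (P ∪ Q) ↔ θ₁ P ∨ θ₂ Q)
    (hinter : ∀ P ⊆ A, ∀ Q ⊆ A, κ (P ∩ Q) ↔ θ₁ P ∧ θ₂ Q) (hempty : ¬ θ ∅) :
    ∀ P ⊆ A, ∀ Q ⊆ A, (θ (P ∪ Q) ↔ θ P ∨ θ Q) ∧ (θ (P ∩ Q) ↔ θ P ∧ θ Q) := by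
  have h₀ := hunion ∅ (empty_subset A) ∅ (empty_subset A)
  rw [union_self, iff_false_left hempty, not_or] at h₀
  have h₁ : ∀ P ⊆ A, θ₁ P ↔ θ P := fun P hP => by
    have := hunion P hP ∅ (empty_subset A)
    rw [union_empty, or_iff_left h₀.2] at this
    exact this.symm
  have h₂ : ∀ P ⊆ A, θ₂ P ↔ θ P := fun P hP => by
    have := hunion ∅ (empty_subset A) P hP
    rw [empty_union, or_iff_right h₀.1] at this
    exact this.symm
  have hκ : ∀ P ⊆ A, κ P ↔ θ P := fun P hP => by
    have := hinter P hP P hP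
    rwa [inter_self, h₁ P hP, h₂ P hP, and_self] at this
  intro P hP Q hQ
  rw [hunion P hP Q hQ, ← hκ _ (inter_subset_left.trans hP), hinter P hP Q hQ, h₁ P hP, h₂ Q hQ]
  exact ⟨Iff.rfl, Iff.rfl⟩

namespace IsContinuousLift

variable {F ψ : Set ℕ → Set ℕ} {A : Set ℕ}

theorem exists_exact_laws (hF : IsAlmostHom F) (hψ : IsContinuousLift F ψ A) :
    ∃ c, ∃ r ⊆ A, ∃ s ⊆ A, ∃ l, ∀ m ≥ c, ∀ P ⊆ A, ∀ Q ⊆ A, AgreeBelow l P r → AgreeBelow l Q s →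
      (m ∈ ψ (P ∪ Q) ↔ m ∈ ψ P ∨ m ∈ ψ Q) ∧ (m ∈ ψ (P ∩ Q) ↔ m ∈ ψ P ∧ m ∈ ψ Q) := by
  have hlaws : ∀ P ⊆ A, ∀ Q ⊆ A, ∃ c, ∀ m ≥ c,
      (m ∈ ψ (P ∪ Q) ↔ m ∈ ψ P ∨ m ∈ ψ Q) ∧ (m ∈ ψ (P ∩ Q) ↔ m ∈ ψ P ∧ m ∈ ψ Q) := by
    intro P hP Q hQ
    refine eventually_atTop.1 ?_
    filter_upwards [hψ.eventually_iff P hP, hψ.eventually_iff Q hQ, hF.union P Q, hF.inter P Q,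
      hψ.eventually_iff (P ∪ Q) (union_subset hP hQ),
      hψ.eventually_iff (P ∩ Q) (inter_subset_left.trans hP)] with m hP hQ hU hI hU' hI'
    exact ⟨by rw [hU', hP, hQ, hU], by rw [hI', hP, hQ, hI]⟩
  obtain ⟨c, r, hr, s, hs, l, hdense⟩ := exists_stem_pair_of_cover (Y := fun c => {p | ∀ m ≥ c,
    (m ∈ ψ (p.1 ∪ p.2) ↔ m ∈ ψ p.1 ∨ m ∈ ψ p.2) ∧
    (m ∈ ψ (p.1 ∩ p.2) ↔ m ∈ ψ p.1 ∧ m ∈ ψ p.2)}) hlaws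
  refine ⟨c, r, hr, s, hs, l, fun m hm P hP Q hQ hPr hQs => ?_⟩
  obtain ⟨l', hcont⟩ := hψ.continuous m
  obtain ⟨P', hP', Q', hQ', hmem, hPP', hQQ'⟩ := hdense P hP Q hQ hPr hQs l'
  have hlaw := hmem m hm
  rwa [hcont _ hP' _ hP hPP', hcont _ hQ' _ hQ hQQ',
    hcont _ (union_subset hP' hQ') _ (union_subset hP hQ) (hPP'.union hQQ'),
    hcont _ (inter_subset_left.trans hP') _ (inter_subset_left.trans hP) (hPP'.inter hQQ')] at hlaw

theorem exists_stem_forall_iff_mem (hF : IsAlmostHom F) (hψ : IsContinuousLift F ψ A) :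
    ∃ c l, ∃ t ⊆ A ∩ Iio l, ∀ m ≥ c, m ∉ ψ t →
      ∃ a, ∀ P ⊆ A \ Iio l, m ∈ ψ (t ∪ P) ↔ m ∈ ψ (t ∪ (A \ Iio l)) ∧ a ∈ P := by
  obtain ⟨c, r, hr, s, hs, l, hlaws⟩ := hψ.exists_exact_laws hF
  have hrA : r ∩ Iio l ⊆ A := inter_subset_left.trans hr
  have hsA : s ∩ Iio l ⊆ A := inter_subset_left.trans hs
  refine ⟨c, l, r ∩ Iio l ∪ s ∩ Iio l, union_subset (inter_subset_inter_left _ hr)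
    (inter_subset_inter_left _ hs), fun m hm hmt => ?_⟩
  have hstem : ∀ t P, P ⊆ A \ Iio l → AgreeBelow l (t ∩ Iio l ∪ P) t := fun t P hP i hi => by
    have := @hP i
    simp_all
  have hcross : ∀ P ⊆ A \ Iio l, ∀ Q ⊆ A \ Iio l,
      r ∩ Iio l ∩ (s ∩ Iio l) ∪ P ∩ Q = (r ∩ Iio l ∪ P) ∩ (s ∩ Iio l ∪ Q) := by
    intro P hP Q hQ
    ext i
    have hPi : i ∈ P → i ∉ Iio l := fun h => (hP h).2
    have hQi : i ∈ Q → i ∉ Iio l := fun h => (hQ h).2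
    simp only [mem_union, mem_inter_iff]
    tauto
  have hlaw : ∀ P ⊆ A \ Iio l, ∀ Q ⊆ A \ Iio l, _ := fun P hP Q hQ =>
    hlaws m hm (r ∩ Iio l ∪ P) (union_subset hrA (hP.trans sdiff_subset)) (s ∩ Iio l ∪ Q)
      (union_subset hsA (hQ.trans sdiff_subset)) (hstem r P hP) (hstem s Q hQ)
  have hhom := union_and_inter_iff_of_coupled (A := A \ Iio l)
    (θ := fun P => m ∈ ψ (r ∩ Iio l ∪ s ∩ Iio l ∪ P))
    (κ := fun P => m ∈ ψ (r ∩ Iio l ∩ (s ∩ Iio l) ∪ P))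
    (fun P hP Q hQ => by
      rw [union_union_union_comm]
      exact (hlaw P hP Q hQ).1)
    (fun P hP Q hQ => by
      rw [hcross P hP Q hQ]
      exact (hlaw P hP Q hQ).2) (by rwa [union_empty])
  obtain ⟨k, hk⟩ := hψ.continuous m
  have hsub : ∀ P ⊆ A \ Iio l, r ∩ Iio l ∪ s ∩ Iio l ∪ P ⊆ A := fun P hP =>
    union_subset (union_subset hrA hsA) (hP.trans sdiff_subset)
  exact exists_forall_iff_mem_of_hom (fun P hP Q hQ => (hhom P hP Q hQ).1)
    (fun P hP Q hQ => (hhom P hP Q hQ).2) (by rwa [union_empty])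
    ⟨k, fun P hP Q hQ h => hk _ (hsub P hP) _ (hsub Q hQ) ((AgreeBelow.refl k _).union h)⟩

theorem trivialOn (hF : IsAlmostHom F) (hψ : IsContinuousLift F ψ A) : TrivialOn F A := by
  obtain ⟨c, l, t, ht, hpoint⟩ := hψ.exists_stem_forall_iff_mem hF
  suffices htail : TrivialOn F (A \ Iio l) from
    (htail.union hF (.of_finite hF (finite_Iio l))).mono fun i hi => by simp [hi]
  choose! g hg using hpoint
  have hψF : ∀ P ⊆ A \ Iio l, ∀ᶠ m in atTop,
      (m ∈ ψ (t ∪ P) ↔ m ∈ ψ t ∨ m ∈ F P) ∧ (m ∈ F P → m ∉ ψ t) := by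
    intro P hP
    have htA : t ⊆ A := ht.trans inter_subset_left
    have hdisj : Disjoint P t := disjoint_left.2 fun i hi hit => (hP hi).2 (ht hit).2
    filter_upwards [hψ.eventually_iff (t ∪ P) (union_subset htA (hP.trans sdiff_subset)),
      hψ.eventually_iff t htA, hF.union t P, hF.disjoint hdisj] with m htP ht hunion hd
    rw [htP, hunion, ht]
    exact ⟨Iff.rfl, hd⟩
  refine ⟨g, fun P hP => ?_⟩
  filter_upwards [eventually_ge_atTop c, hψF P hP, hψF (A \ Iio l) subset_rfl]
    with m hm hmP hmA
  by_cases hmt : m ∈ ψ t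
  · exact iff_of_false (fun h => hmP.2 h hmt) fun h => hmA.2 h.1 hmt
  · have := hg m hm hmt P hP
    rwa [hmP.1, hmA.1, or_iff_right hmt, or_iff_right hmt] at this

end IsContinuousLift

/-! ### Diagonalization against continuous families -/

/-- The coordinates in `F B` of `F` are uniformly continuous on the family `N`. Here `N` consists of
subsets of `B`, so that the other coordinates are negligible. -/
def IsContinuousFamily (F : Set ℕ → Set ℕ) (B : Set ℕ) (N : Set (Set ℕ)) : Prop :=
  ∀ m ∈ F B, ∃ l, ∀ P ∈ N, ∀ Q ∈ N, AgreeBelow l P Q → (m ∈ F P ↔ m ∈ F Q)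

/-- The members of `N` whose image coincides with `F P₀` on the part of `F A` above `c`. -/
def matching (F : Set ℕ → Set ℕ) (N : Set (Set ℕ)) (A P₀ : Set ℕ) (c : ℕ) : Set (Set ℕ) :=
  {P ∈ N | ∀ m ≥ c, m ∈ F A → (m ∈ F P ↔ m ∈ F P₀)}

/-- Every set consisting of `P₀ ∪ z` and of a subset of `C` with the same stem of length `l` as `s`
is a limit of members of `N` matching `P₀` on `A` above `c`. -/
def Forces (F : Set ℕ → Set ℕ) (N : Set (Set ℕ)) (A C z P₀ s : Set ℕ) (l c : ℕ) : Prop :=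
  ∀ w ⊆ C, AgreeBelow l w s → P₀ ∪ z ∪ w ∈ agreeClosure (matching F N A P₀ c)

section Diagonalization

variable {F : Set ℕ → Set ℕ} {N : Set (Set ℕ)} {A B C z : Set ℕ}

theorem Forces.agree {P₀ P₁ s t : Set ℕ} {l₀ l₁ c₀ c₁ k m : ℕ}
    (h₀ : Forces F N A C z P₀ s l₀ c₀) (h₁ : Forces F N A C z P₁ t l₁ c₁) (ht : t ⊆ C)
    (hst : AgreeBelow l₀ t s) (hc₀ : c₀ ≤ m) (hc₁ : c₁ ≤ m) (hm : m ∈ F A)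
    (hk : ∀ P ∈ N, ∀ Q ∈ N, AgreeBelow k P Q → (m ∈ F P ↔ m ∈ F Q))
    (hP : AgreeBelow k P₀ P₁) : m ∈ F P₀ ↔ m ∈ F P₁ := by
  obtain ⟨Q₀, ⟨hQ₀, hmatch₀⟩, hagree₀⟩ := h₀ t ht hst k
  obtain ⟨Q₁, ⟨hQ₁, hmatch₁⟩, hagree₁⟩ := h₁ t ht (.refl l₁ t) k
  rw [← hmatch₀ m hc₀ hm, ← hmatch₁ m hc₁ hm]
  exact hk Q₀ hQ₀ Q₁ hQ₁ (hagree₀.trans (((hP.union (.refl k z)).union (.refl k t)).trans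
    hagree₁.symm))

theorem exists_dense_forces
    (hforce : ∀ P₀ ⊆ A, ∀ s ⊆ C, ∀ l, ∃ t ⊆ C, ∃ l' c, AgreeBelow l t s ∧
      Forces F N A C z P₀ t l' c) :
    ∃ s ⊆ C, ∃ l c, ∃ r ⊆ A, ∃ l₀, ∀ P ⊆ A, AgreeBelow l₀ P r →
      P ∈ agreeClosure {P₀ | P₀ ⊆ A ∧ Forces F N A C z P₀ s l c} := by
  classical
  obtain ⟨⟨σ, l, c⟩, r, hr, l₀, hdense⟩ := exists_stem_of_cover (ι := Finset ℕ × ℕ × ℕ)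
    (A := A) (Y := fun p => {P₀ | Forces F N A C z P₀ (C ∩ p.1) p.2.1 p.2.2}) fun P₀ hP₀ => by
      obtain ⟨t, ht, l', c, -, h⟩ := hforce P₀ hP₀ ∅ (empty_subset C) 0
      have hfin : (t ∩ Iio l').Finite := (finite_Iio l').inter_of_right t
      refine ⟨⟨hfin.toFinset, l', c⟩, fun w hw hwt => h w hw (hwt.trans fun i hi => ?_)⟩
      simpa [hi] using @ht i
  refine ⟨C ∩ σ, inter_subset_left, l, c, r, hr, l₀, fun P hP hPr k => ?_⟩
  obtain ⟨Q, ⟨hQ, hQA⟩, hagree⟩ := hdense P hP hPr k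
  exact ⟨Q, ⟨hQA, hQ⟩, hagree⟩

theorem IsContinuousFamily.trivialOn_of_forces (hF : IsAlmostHom F)
    (hN : IsContinuousFamily F B N) (hAB : A ⊆ B)
    (hforce : ∀ P₀ ⊆ A, ∀ s ⊆ C, ∀ l, ∃ t ⊆ C, ∃ l' c, AgreeBelow l t s ∧
      Forces F N A C z P₀ t l' c) : TrivialOn F A := by
  obtain ⟨s, hs, l, c, r, hr, l₀, hdense⟩ := exists_dense_forces hforce
  choose! L hL using hN
  let r₀ := r ∩ Iio l₀
  -- `F Q` can be read off from any `P₀` in the dense set close to `Q ∪ r₀`, by `Forces.agree`.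
  let ψ (Q : Set ℕ) : Set ℕ := {m | m ∈ F B ∧ m ∈ F (A \ Iio l₀) ∧
    ∃ P₀ ⊆ A, Forces F N A C z P₀ s l c ∧ AgreeBelow (L m) P₀ (Q ∪ r₀) ∧ m ∈ F P₀}
  suffices hψ : IsContinuousLift F ψ (A \ Iio l₀) from
    ((hψ.trivialOn hF).union hF (.of_finite hF (finite_Iio l₀))).mono fun i hi => by simp [hi]
  refine ⟨fun Q hQ => ?_, fun m => ⟨L m, fun P _ Q _ hPQ => ?_⟩⟩
  · have hQr : Q ∪ r₀ ⊆ A := union_subset (hQ.trans sdiff_subset) (inter_subset_left.trans hr)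
    obtain ⟨t, ht, l', c', hts, hforces⟩ := hforce (Q ∪ r₀) hQr s hs l
    have hdisj : Disjoint (A \ Iio l₀) r₀ := disjoint_left.2 fun i hi hir => hi.2 hir.2
    filter_upwards [eventually_ge_atTop c, eventually_ge_atTop c', hF.union Q r₀,
      hF.disjoint hdisj, hF.mono hQ, hF.mono hAB, hF.mono (sdiff_subset : A \ Iio l₀ ⊆ A)]
      with m hc hc' hunion hdisj hQA hAB htail
    have heq : m ∈ F B → m ∈ F (A \ Iio l₀) → ∀ P₀, Forces F N A C z P₀ s l c →
        AgreeBelow (L m) P₀ (Q ∪ r₀) → (m ∈ F P₀ ↔ m ∈ F Q) := fun hB hA P₀ hP₀ hagree => by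
      rw [hP₀.agree hforces ht hts hc hc' (htail hA) (hL m hB) hagree, hunion,
        or_iff_left (hdisj hA)]
    refine ⟨fun ⟨hB, hA, P₀, _, hP₀, hagree, hm⟩ => (heq hB hA P₀ hP₀ hagree).1 hm, fun hm => ?_⟩
    have hA := hQA hm
    have hB := hAB (htail hA)
    obtain ⟨P₀, ⟨hP₀A, hP₀⟩, hagree⟩ := hdense (Q ∪ r₀) hQr (fun i hi => by
      have := @hQ i
      simp_all [r₀]) (L m)
    exact ⟨hB, hA, P₀, hP₀A, hP₀, hagree, (heq hB hA P₀ hP₀ hagree).2 hm⟩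
  · have hiff : ∀ P₀, AgreeBelow (L m) P₀ (P ∪ r₀) ↔ AgreeBelow (L m) P₀ (Q ∪ r₀) := fun P₀ =>
      ⟨fun h => h.trans (hPQ.union (.refl _ _)), fun h => h.trans (hPQ.symm.union (.refl _ _))⟩
    simp only [ψ, mem_ofPred_eq, hiff]

theorem exists_forall_notMem_agreeClosure {P₀ s : Set ℕ} {l : ℕ} (hs : s ⊆ C)
    (hforce : ∀ t ⊆ C, ∀ l' c, AgreeBelow l t s → ¬ Forces F N A C z P₀ t l' c) (c k : ℕ)
    (r : Set ℕ) : ∃ t k', AgreeBelow k t r ∧ ∀ w, AgreeBelow k' w t →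
      P₀ ∪ z ∪ (s ∩ Iio l) ∪ w ∩ (C \ Iio l) ∉ agreeClosure (matching F N A P₀ c) := by
  obtain ⟨w, hw, hagree, hmem⟩ : ∃ w ⊆ C, AgreeBelow (max l k) w (s ∩ Iio l ∪ r ∩ (C \ Iio l)) ∧
      P₀ ∪ z ∪ w ∉ agreeClosure (matching F N A P₀ c) := by
    simpa only [Forces, not_forall, exists_prop] using
      hforce (s ∩ Iio l ∪ r ∩ (C \ Iio l))
        (union_subset (inter_subset_left.trans hs) (inter_subset_right.trans sdiff_subset))
        (max l k) c fun i hi => by simp [hi]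
  obtain ⟨k', hk'⟩ : ∃ k', ∀ Q ∈ matching F N A P₀ c, ¬ AgreeBelow k' Q (P₀ ∪ z ∪ w) := by
    simpa only [agreeClosure, mem_ofPred_eq, not_forall, not_exists, not_and] using hmem
  have hwC (i : ℕ) : i ∈ w → i ∈ C := @hw i
  have hws (i : ℕ) (hi : i < l) : i ∈ w ↔ i ∈ s := by
    simp [hagree i (hi.trans_le (le_max_left l k)), hi]
  refine ⟨w ∩ (C \ Iio l) ∪ r \ (C \ Iio l), k', fun i hi => ?_, fun w' hw' hmem' => ?_⟩
  · have := hagree i (hi.trans_le (le_max_right l k))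
    grind
  · obtain ⟨Q, hQ, hQw⟩ := hmem' k'
    refine hk' Q hQ (hQw.trans fun i hi => ?_)
    have := hw' i hi
    grind

theorem union_inter_eq_and_forall_mem_iff_of_sdiff_eq {P T E u b : Set ℕ} (hTE : Disjoint T E)
    (h : P \ (E ∩ b) = T ∪ u ∩ E ∩ bᶜ) :
    T ∪ P ∩ E = P ∧ ∀ i ∉ b, i ∈ P ∩ E ∪ u \ E ↔ i ∈ u := by
  rw [Set.ext_iff] at h
  rw [disjoint_left] at hTE
  refine ⟨Set.ext fun i => ?_, fun i hi => ?_⟩ <;>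
  · have := h i
    have := @hTE i
    grind

theorem IsContinuousFamily.exists_blocks_forall_sdiff_ne (hF : IsAlmostHom F)
    (hN : IsContinuousFamily F B N) (hAB : A ⊆ B) (hAC : Disjoint A C) (hz : Disjoint z (A ∪ C))
    (hA : ¬ TrivialOn F A) :
    ∃ l, StrictMono l ∧ l 0 = 0 ∧ ∃ E ⊆ C, (C \ E).Finite ∧
      ∃ stem ⊆ z ∪ A ∪ C \ E, z ⊆ stem ∧ ∃ u, ∀ J, Jᶜ.Infinite → ∀ P ∈ N,
        P \ (E ∩ blocks l J) ≠ stem ∪ u ∩ E ∩ (blocks l J)ᶜ := by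
  obtain ⟨P₀, hP₀, s, hs, k, hforce⟩ : ∃ P₀ ⊆ A, ∃ s ⊆ C, ∃ k, ∀ t ⊆ C, ∀ l' c,
      AgreeBelow k t s → ¬ Forces F N A C z P₀ t l' c := by
    by_contra! h
    exact hA (hN.trivialOn_of_forces hF hAB h)
  set E := C \ Iio k with hE
  set stem := P₀ ∪ z ∪ (s ∩ Iio k) with hstem
  obtain ⟨l, hl, hl₀, u, hu⟩ := exists_blocks_forces
    (D := fun c => {w | stem ∪ w ∩ E ∉ agreeClosure (matching F N A P₀ c)})
    (fun c c' hc w hw hmem => hw fun j =>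
      let ⟨Q, ⟨hQ, hmatch⟩, hagree⟩ := hmem j
      ⟨Q, ⟨hQ, fun m hm => hmatch m (hc.trans hm)⟩, hagree⟩)
    (fun c r j => exists_forall_notMem_agreeClosure hs hforce c j r)
  have hstemA : stem ∩ A = P₀ := by
    have hzA : z ∩ A = ∅ := (hz.mono_right subset_union_left).inter_eq
    have hsA : s ∩ Iio k ∩ A = ∅ := (hAC.symm.mono_left (inter_subset_left.trans hs)).inter_eq
    rw [hstem, union_inter_distrib_right, union_inter_distrib_right, hzA, hsA, union_empty,
      union_empty, inter_eq_left.2 hP₀]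
  have hEA : E ∩ A = ∅ := (hAC.symm.mono_left sdiff_subset).inter_eq
  have hstemE : Disjoint stem E :=
    (((hAC.mono_left hP₀).union_left (hz.mono_right subset_union_right)).mono_right
      sdiff_subset).union_left (disjoint_left.2 fun i hi hiE => hiE.2 hi.2)
  refine ⟨l, hl, hl₀, E, sdiff_subset, (finite_Iio k).subset fun i hi => by simp_all,
    stem, by grind, by grind, u, fun J hJ P hP heq => ?_⟩
  obtain ⟨hPstem, hPu⟩ := union_inter_eq_and_forall_mem_iff_of_sdiff_eq hstemE heq
  have hPA : P ∩ A = P₀ := by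
    rw [← hPstem, union_inter_distrib_right, hstemA, inter_assoc, hEA, inter_empty, union_empty]
  obtain ⟨c, hc⟩ := eventually_atTop.1 (hF.inter P A)
  refine hu (P ∩ E ∪ u \ E) ((Nat.frequently_atTop_iff_infinite.2 hJ).mono fun j hj i hi =>
    hPu i fun h => hj ((mem_blocks_iff hl.monotone hi).1 h)) c ?_
  rw [union_inter_distrib_right, inter_assoc, inter_self, sdiff_inter_self, union_empty, hPstem]
  refine fun j => ⟨P, ⟨hP, fun m hm hmA => ?_⟩, .refl j P⟩
  rw [← hPA, hc m hm, and_iff_left hmA]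

theorem exists_blocks_infinite_not_trivialOn (hF : IsAlmostHom F) {E : Set ℕ} {l : ℕ → ℕ}
    (hl : StrictMono l) (hl₀ : l 0 = 0) {κ : ℕ → ℕ}
    (hE : {k | ¬ TrivialOn F (E ∩ κ ⁻¹' {k})}.Infinite) :
    ∃ J : Set ℕ, Jᶜ.Infinite ∧ {k | ¬ TrivialOn F (E ∩ blocks l J ∩ κ ⁻¹' {k})}.Infinite := by
  by_cases heven : {k | ¬ TrivialOn F (E ∩ blocks l {j | Even j} ∩ κ ⁻¹' {k})}.Infinite
  · exact ⟨{j | Even j}, Nat.frequently_atTop_iff_infinite.1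
      (Nat.frequently_odd.mono fun j hj => Nat.not_even_iff_odd.2 hj), heven⟩
  · refine ⟨{j | Even j}ᶜ, ?_, (hE.sdiff (not_infinite.1 heven)).mono fun k hk hodd => hk.1 ?_⟩
    · rw [compl_compl]
      exact Nat.frequently_atTop_iff_infinite.1 Nat.frequently_even
    · rw [blocks_compl hl hl₀] at hodd
      refine ((not_not.1 hk.2).union hF hodd).mono fun i hi => ?_
      by_cases h : i ∈ blocks l {j | Even j} <;> simp_all

theorem IsContinuousFamily.exists_extension_forall_sdiff_ne (hF : IsAlmostHom F)
    (hN : IsContinuousFamily F B N) {R : Set ℕ} (hR : R ⊆ B) (hz : z ⊆ B \ R) {κ : ℕ → ℕ}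
    (hbad : {k | ¬ TrivialOn F (R ∩ κ ⁻¹' {k})}.Infinite) :
    ∃ R' ⊆ R, ∃ z' ⊆ B \ R', z' \ R = z ∧ {k | ¬ TrivialOn F (R' ∩ κ ⁻¹' {k})}.Infinite ∧
      ∀ P ∈ N, P \ R' ≠ z' := by
  obtain ⟨k₀, hk₀⟩ := hbad.nonempty
  obtain ⟨l, hl, hl₀, E, hE, hCE, stem, hstem, hzstem, u, havoid⟩ :=
    hN.exists_blocks_forall_sdiff_ne hF (inter_subset_left.trans hR)
      (C := R \ κ ⁻¹' {k₀}) (z := z) (disjoint_left.2 fun i hi hi' => hi'.2 hi.2)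
      (disjoint_left.2 fun i hi hi' => (hz hi).2 (hi'.elim (·.1) (·.1))) hk₀
  have hEbad : {k | ¬ TrivialOn F (E ∩ κ ⁻¹' {k})}.Infinite := by
    refine (hbad.sdiff (finite_singleton k₀)).mono fun k hk hEk => hk.1 ?_
    refine (hEk.union hF (.of_finite hF hCE)).mono fun i ⟨hi, hik⟩ => ?_
    by_cases hiE : i ∈ E
    · exact .inl ⟨hiE, hik⟩
    · exact .inr ⟨⟨hi, fun h => hk.2 (hik.symm.trans h)⟩, hiE⟩
  obtain ⟨J, hJ, hbadJ⟩ := exists_blocks_infinite_not_trivialOn hF hl hl₀ hEbad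
  refine ⟨E ∩ blocks l J, inter_subset_left.trans (hE.trans sdiff_subset),
    stem ∪ u ∩ E ∩ (blocks l J)ᶜ, ?_, ?_, hbadJ, havoid J hJ⟩
  · refine union_subset (fun i hi => ?_) fun i hi => ⟨hR (hE hi.1.2).1, fun h => hi.2 h.2⟩
    have := @hstem i hi
    have := @hR i
    have := @hz i
    have := @hE i
    clear hbad hEbad hbadJ
    grind
  · ext i
    have := @hstem i
    have := @hzstem i
    have := @hz i
    have := @hE i
    clear hbad hEbad hbadJ
    grind

/-- If infinitely many fibres were bad, one of them could be spent at each stage `n` to ensure that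
the limit of the construction is not in `N n`. -/
theorem finite_not_trivialOn_of_cover (hF : IsAlmostHom F) {N : ℕ → Set (Set ℕ)}
    (hN : ∀ n, IsContinuousFamily F B (N n)) (hcover : ∀ P ⊆ B, ∃ n, P ∈ N n) (κ : ℕ → ℕ) :
    {k | ¬ TrivialOn F (B ∩ κ ⁻¹' {k})}.Finite := by
  by_contra hbad
  let Stage := {p : Set ℕ × Set ℕ // p.1 ⊆ B ∧ p.2 ⊆ B \ p.1 ∧
    {k | ¬ TrivialOn F (p.1 ∩ κ ⁻¹' {k})}.Infinite}
  have hstep : ∀ n (p : Stage), ∃ q : Stage, q.1.1 ⊆ p.1.1 ∧ q.1.2 \ p.1.1 = p.1.2 ∧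
      ∀ P ∈ N n, P \ q.1.1 ≠ q.1.2 := by
    rintro n ⟨⟨R, z⟩, hR, hz, hbad⟩
    obtain ⟨R', hR', z', hz', heq, hbad', hne⟩ :=
      (hN n).exists_extension_forall_sdiff_ne hF hR hz hbad
    exact ⟨⟨(R', z'), hR'.trans hR, hz', hbad'⟩, hR', heq, hne⟩
  choose next hnextR hnextz hnextN using hstep
  let stage (n : ℕ) : Stage :=
    n.rec ⟨(B, ∅), subset_rfl, empty_subset _, hbad⟩ next
  let R (n : ℕ) := (stage n).1.1
  let z (n : ℕ) := (stage n).1.2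
  have hR : Antitone R := antitone_nat_of_succ_le fun n => hnextR n (stage n)
  have hz : ∀ n, z (n + 1) \ R n = z n := fun n => hnextz n (stage n)
  have hsdiff : ∀ n k, n ≤ k → z k \ R n = z n := by
    intro n k hnk
    induction k, hnk using Nat.le_induction with
    | base => exact (subset_sdiff.1 (stage n).2.2.1).2.sdiff_eq_left
    | succ k hnk ih =>
      rw [← ih, ← hz k, sdiff_sdiff, union_eq_self_of_subset_left (hR hnk)]
  have hmono : Monotone z := fun n k hnk => (hsdiff n k hnk).symm.subset.trans sdiff_subset
  have hlimit : ∀ n, (⋃ k, z k) \ R n = z n := fun n => by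
    refine subset_antisymm (fun i ⟨hi, hiR⟩ => ?_) (fun i hi =>
      ⟨mem_iUnion.2 ⟨n, hi⟩, ((stage n).2.2.1 hi).2⟩)
    obtain ⟨k, hk⟩ := mem_iUnion.1 hi
    rw [← hsdiff n (max n k) (le_max_left n k)]
    exact ⟨hmono (le_max_right n k) hk, hiR⟩
  obtain ⟨n, hn⟩ := hcover (⋃ k, z k)
    (iUnion_subset fun k => (stage k).2.2.1.trans sdiff_subset)
  exact hnextN n (stage n) _ hn (hlimit (n + 1))

end Diagonalization

/-! ### Tree-like almost disjoint families -/

/-- A family of sets of natural numbers indexed by the branches of the binary tree is tree-like if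
the elements common to two of its members are bounded, and the bound depends only on initial
segments of the two branches. -/
def TreeLike (A : (ℕ → Bool) → Set ℕ) : Prop :=
  Pairwise fun x x' => ∃ l, ∀ y y', EqOn y x (Iio l) → EqOn y' x' (Iio l) → A y ∩ A y' ⊆ Iio l

theorem exists_treeLike_infinite_fibers : ∃ (A : (ℕ → Bool) → Set ℕ) (κ : ℕ → ℕ), TreeLike A ∧
    ∀ x k, (A x ∩ κ ⁻¹' {k}).Infinite := by
  let node (x : ℕ → Bool) (p : ℕ × ℕ) : ℕ := Encodable.encode (PiNat.res x p.1, p.2)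
  have hnode {x y : ℕ → Bool} {p q : ℕ × ℕ} (h : node x p = node y q) :
      p = q ∧ EqOn x y (Iio p.1) := by
    obtain ⟨hres, hk⟩ := Prod.mk.inj (Encodable.encode_injective h)
    have hl : p.1 = q.1 := by simpa only [PiNat.res_length] using congrArg List.length hres
    rw [← hl] at hres
    exact ⟨Prod.ext hl hk, fun i hi => PiNat.res_eq_res.1 hres hi⟩
  let κ (n : ℕ) : ℕ := ((Encodable.decode (α := List Bool × ℕ) n).map Prod.snd).getD 0
  have hκ (x : ℕ → Bool) (p : ℕ × ℕ) : κ (node x p) = p.2 := by simp [κ, node]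
  refine ⟨fun x => node x '' {p | p.2 ≤ p.1}, κ, fun x x' hne => ?_, fun x k => ?_⟩
  · obtain ⟨i, hi⟩ := Function.ne_iff.1 hne
    have hfin : {p : ℕ × ℕ | p.2 ≤ p.1 ∧ p.1 ≤ i}.Finite :=
      ((finite_Iic i).prod (finite_Iic i)).subset fun p hp => ⟨hp.2, hp.1.trans hp.2⟩
    obtain ⟨N, hN⟩ := (hfin.image (node x)).bddAbove
    refine ⟨max (i + 1) (N + 1), fun y y' hy hy' => ?_⟩
    rintro _ ⟨⟨p, hp, rfl⟩, q, -, hq⟩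
    obtain ⟨-, hagree⟩ := hnode hq.symm
    have hpi : p.1 ≤ i := by
      by_contra! hlt
      have hle : i < max (i + 1) (N + 1) := (Nat.lt_succ_self i).trans_le (le_max_left ..)
      exact hi ((hy hle).symm.trans ((hagree hlt).trans (hy' hle)))
    have hyx : PiNat.res y p.1 = PiNat.res x p.1 := PiNat.res_eq_res.2 fun j hj =>
      hy ((hj.trans_le hpi).trans ((Nat.lt_succ_self i).trans_le (le_max_left ..)))
    have hle : node y p ≤ N := hN ⟨p, ⟨hp, hpi⟩, by simp only [node, hyx]⟩
    exact (Nat.lt_succ_of_le hle).trans_le (le_max_right ..)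
  · refine infinite_of_injective_forall_mem (f := fun l => node x (k + l, k))
      (fun l l' h => ?_) fun l => ⟨⟨_, Nat.le_add_right k l, rfl⟩, hκ x _⟩
    simpa using (hnode h).1

theorem TreeLike.image_preimage {A : (ℕ → Bool) → Set ℕ} (hA : TreeLike A) {α : Type*}
    {e col : α → ℕ} (he : ∀ p q, e p = e q → col p = col q)
    (hfin : ∀ l, (e '' (col ⁻¹' Iio l)).Finite) : TreeLike fun x => e '' (col ⁻¹' A x) := by
  intro x x' hne
  obtain ⟨l, hl⟩ := hA hne
  obtain ⟨N, hN⟩ := (hfin l).bddAbove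
  refine ⟨max l (N + 1), fun y y' hy hy' => ?_⟩
  rintro _ ⟨⟨p, hp, rfl⟩, q, hq, hqp⟩
  rw [mem_preimage, he q p hqp] at hq
  have hpl : col p < l := hl y y' (hy.mono (Iio_subset_Iio (le_max_left ..)))
    (hy'.mono (Iio_subset_Iio (le_max_left ..))) ⟨hp, hq⟩
  exact lt_max_of_lt_right (Nat.lt_succ_of_le (hN (mem_image_of_mem e hpl)))

/-- A set `dom` contained in a member of the family `A`, together with a subset `part` of it. -/
structure TreePoint (A : (ℕ → Bool) → Set ℕ) where
  idx : ℕ → Bool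
  dom : Set ℕ
  part : Set ℕ
  dom_subset : dom ⊆ A idx
  part_subset : part ⊆ dom

namespace TreePoint

variable {F : Set ℕ → Set ℕ} {A : (ℕ → Bool) → Set ℕ} {t t' d : TreePoint A} {l l' m : ℕ}

/-- The sequence coding a point together with the values of `F` at its two sets. -/
def code (F : Set ℕ → Set ℕ) (t : TreePoint A) (i : ℕ) : Bool × Prop × Prop × Prop × Prop :=
  (t.idx i, i ∈ t.dom, i ∈ t.part, i ∈ F t.dom, i ∈ F t.part)

/-- Veličković's open colouring: the `part`s are coherent, but their images under `F` are not. -/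
def Conflict (F : Set ℕ → Set ℕ) (t t' : TreePoint A) : Prop :=
  t.idx ≠ t'.idx ∧ t.part ∩ t'.dom = t'.part ∩ t.dom ∧
    ∃ m ∈ F t.dom, m ∈ F t'.dom ∧ ¬ (m ∈ F t.part ↔ m ∈ F t'.part)

theorem code_eq_iff {i : ℕ} : code F t i = code F t' i ↔ t.idx i = t'.idx i ∧
    (i ∈ t.dom ↔ i ∈ t'.dom) ∧ (i ∈ t.part ↔ i ∈ t'.part) ∧
    (i ∈ F t.dom ↔ i ∈ F t'.dom) ∧ (i ∈ F t.part ↔ i ∈ F t'.part) := by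
  simp only [code, Prod.mk.injEq, eq_iff_iff]

theorem code_injective (F : Set ℕ → Set ℕ) : Injective (code (A := A) F) := by
  intro t t' h
  have hcode (i : ℕ) := code_eq_iff.1 (congrFun h i)
  cases t
  cases t'
  congr 1
  · exact funext fun i => (hcode i).1
  · exact Set.ext fun i => (hcode i).2.1
  · exact Set.ext fun i => (hcode i).2.2.1

theorem Conflict.symm (h : Conflict F t t') : Conflict F t' t :=
  let ⟨hne, hpart, m, hm, hm', hiff⟩ := h
  ⟨hne.symm, hpart.symm, m, hm', hm, fun h => hiff h.symm⟩

theorem part_inter_dom_eq_of_bounded (hA : A t.idx ∩ A t'.idx ⊆ Iio l)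
    (h : ∀ i < l, i ∈ t.part ∧ i ∈ t'.dom ↔ i ∈ t'.part ∧ i ∈ t.dom) :
    t.part ∩ t'.dom = t'.part ∩ t.dom := by
  ext i
  exact ⟨fun hi => (h i (hA ⟨t.dom_subset (t.part_subset hi.1), t'.dom_subset hi.2⟩)).1 hi,
    fun hi => (h i (hA ⟨t.dom_subset hi.2, t'.dom_subset (t'.part_subset hi.1)⟩)).2 hi⟩

theorem Conflict.exists_forall_eqOn (hA : TreeLike A) (h : Conflict F t t') :
    ∃ N, ∀ s s' : TreePoint A, EqOn (code F s) (code F t) (Iio N) →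
      EqOn (code F s') (code F t') (Iio N) → Conflict F s s' := by
  obtain ⟨hne, hpart, m, hm, hm', hiff⟩ := h
  obtain ⟨i₀, hi₀⟩ := Function.ne_iff.1 hne
  obtain ⟨l, hl⟩ := hA hne
  refine ⟨max l (max (i₀ + 1) (m + 1)), fun s s' hs hs' => ?_⟩
  have hcode (i : ℕ) (hi : i < max l (max (i₀ + 1) (m + 1))) := code_eq_iff.1 (hs hi)
  have hcode' (i : ℕ) (hi : i < max l (max (i₀ + 1) (m + 1))) := code_eq_iff.1 (hs' hi)
  refine ⟨fun heq => hi₀ ?_, part_inter_dom_eq_of_bounded (hl _ _ (fun i hi =>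
    (hcode i (lt_max_of_lt_left hi)).1) fun i hi => (hcode' i (lt_max_of_lt_left hi)).1)
    fun i hi => ?_, m, ?_⟩
  · rw [← (hcode i₀ (by simp)).1, ← (hcode' i₀ (by simp)).1, heq]
  · rw [(hcode i (lt_max_of_lt_left hi)).2.1, (hcode' i (lt_max_of_lt_left hi)).2.1,
      (hcode i (lt_max_of_lt_left hi)).2.2.1, (hcode' i (lt_max_of_lt_left hi)).2.2.1]
    exact Set.ext_iff.1 hpart i
  · rw [(hcode m (by simp)).2.2.2.1, (hcode' m (by simp)).2.2.2.1, (hcode m (by simp)).2.2.2.2,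
      (hcode' m (by simp)).2.2.2.2]
    exact ⟨hm, hm', hiff⟩

theorem countable_of_pairwise_conflict (hF : IsAlmostHom F) {Y : Set (TreePoint A)}
    (hY : Y.Pairwise (Conflict F)) : Y.Countable := by
  classical
  by_contra hcount
  -- `W` restricts to `t.part` on each `t.dom`, so `F W` makes uncountably many images coherent.
  let W : Set ℕ := ⋃ t ∈ Y, t.part
  have hW : ∀ t ∈ Y, W ∩ t.dom = t.part := fun t ht => by
    refine subset_antisymm (fun i ⟨hi, hit⟩ => ?_) (subset_inter (subset_biUnion_of_mem ht)
      t.part_subset)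
    obtain ⟨t', ht', hi'⟩ := mem_iUnion₂.1 hi
    obtain rfl | hne := eq_or_ne t t'
    · exact hi'
    · exact (Set.ext_iff.1 (hY ht ht' hne).2.1 i).2 ⟨hi', hit⟩ |>.1
  obtain ⟨⟨c, σ⟩, hσ⟩ := exists_not_countable_sep (β := ℕ × Finset ℕ)
    (r := fun t p => (∀ m ≥ p.1, m ∈ F t.part ↔ m ∈ F W ∧ m ∈ F t.dom) ∧
      AgreeBelow p.1 (F t.part) p.2) hcount fun t ht => by
    obtain ⟨c, hc⟩ := eventually_atTop.1 (hF.inter W t.dom)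
    rw [hW t ht] at hc
    exact ⟨(c, {m ∈ Finset.range c | m ∈ F t.part}), hc, fun m hm => by simp [hm]⟩
  obtain ⟨t, ⟨ht, htW, htσ⟩, t', ⟨ht', htW', htσ'⟩, hne⟩ := Set.not_subsingleton_iff.1
    fun h => hσ h.countable
  obtain ⟨-, -, m, hm, hm', hiff⟩ := hY ht ht' hne
  rcases lt_or_ge m c with hmc | hmc
  · exact hiff ((htσ.trans htσ'.symm) m hmc)
  · exact hiff (by rw [htW m hmc, htW' m hmc, and_iff_left hm, and_iff_left hm'])

theorem exists_cover_pairwise_not_conflict (hOCA : OpenColoringAxiom) (hF : IsAlmostHom F)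
    (hA : TreeLike A) :
    ∃ Z : ℕ → Set (TreePoint A), ⋃ n, Z n = univ ∧
      ∀ n, (Z n).Pairwise fun t t' => ¬ Conflict F t t' :=
  (hOCA.dichotomy_of_coding (code_injective F) (fun _ _ h => h.symm) (fun _ h => h.1 rfl)
    fun _ _ h => h.exists_forall_eqOn hA).resolve_left
      fun ⟨_, hY, hconflict⟩ => hY (countable_of_pairwise_conflict hF hconflict)

theorem exists_bound_inter_of_dense (hA : TreeLike A) {x : ℕ → Bool} {Z D : Set (TreePoint A)}
    (hD : ∀ t ∈ Z, ∀ N, ∃ d ∈ D, EqOn (code F d) (code F t) (Iio N)) (hx : ∀ d ∈ D, x ≠ d.idx)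
    (l : ℕ) :
    ∃ l', ∀ t ∈ Z, ∃ d ∈ D, EqOn (code F d) (code F t) (Iio l) ∧ A x ∩ A d.idx ⊆ Iio l' := by
  let start (t : TreePoint A) (i : Fin l) := code F t i
  have hbound (p : start '' Z) : ∃ N, ∃ d ∈ D, start d = p ∧ A x ∩ A d.idx ⊆ Iio N := by
    obtain ⟨_, t, ht, rfl⟩ := p
    obtain ⟨d, hd, hdt⟩ := hD t ht l
    obtain ⟨N, hN⟩ := hA (hx d hd)
    exact ⟨N, d, hd, funext fun i => hdt i.2, hN _ _ (eqOn_refl ..) (eqOn_refl ..)⟩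
  choose N d hd hstart hN using hbound
  obtain ⟨l', hl'⟩ := (finite_range N).bddAbove
  refine ⟨l', fun t ht => ?_⟩
  let p : start '' Z := ⟨start t, mem_image_of_mem _ ht⟩
  exact ⟨d p, hd p, fun i hi => congrFun (hstart p) ⟨i, hi⟩,
    (hN p).trans (Iio_subset_Iio (hl' (mem_range_self p)))⟩

theorem mem_iff_mem_of_not_conflict (hd : ¬ Conflict F t d) (hne : t.idx ≠ d.idx)
    (hcode : EqOn (code F d) (code F t') (Iio l)) (hl' : A t.idx ∩ A d.idx ⊆ Iio l')
    (hdom : AgreeBelow l t.dom t'.dom) (hpart : AgreeBelow l t.part t'.part)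
    (hgap : Disjoint t.dom (Ico l l')) (hm : m < l) (hmt : m ∈ F t.dom) (hmt' : m ∈ F t'.dom) :
    m ∈ F t.part ↔ m ∈ F t'.part := by
  have hcode' (i : ℕ) (hi : i < l) := code_eq_iff.1 (hcode hi)
  have hcoherent : t.part ∩ d.dom = d.part ∩ t.dom :=
    part_inter_dom_eq_of_bounded hl' fun i hi => by
      rcases lt_or_ge i l with hil | hil
      · rw [(hcode' i hil).2.1, (hcode' i hil).2.2.1, hdom i hil, hpart i hil]
      · have hit : i ∉ t.dom := disjoint_right.1 hgap ⟨hil, hi⟩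
        exact iff_of_false (fun h => hit (t.part_subset h.1)) fun h => hit h.2
  by_contra hiff
  refine hd ⟨hne, hcoherent, m, hmt, (hcode' m hm).2.2.2.1.2 hmt', ?_⟩
  rwa [(hcode' m hm).2.2.2.2]

end TreePoint

section TreeLike

variable {F : Set ℕ → Set ℕ} {A : (ℕ → Bool) → Set ℕ}

theorem TreeLike.exists_strictMono_isContinuousFamily (hA : TreeLike A)
    {Z D : ℕ → Set (TreePoint A)} (hZ : ∀ n, (Z n).Pairwise fun t t' => ¬ t.Conflict F t')
    (hDZ : ∀ n, D n ⊆ Z n)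
    (hD : ∀ n, ∀ t ∈ Z n, ∀ N, ∃ d ∈ D n, EqOn (d.code F) (t.code F) (Iio N))
    {x : ℕ → Bool} (hx : ∀ n, ∀ d ∈ D n, x ≠ d.idx) :
    ∃ l : ℕ → ℕ, StrictMono l ∧ l 0 = 0 ∧ ∀ J, Jᶜ.Infinite → ∀ n,
      IsContinuousFamily F (A x ∩ blocks l J) {P | ∃ h : P ⊆ A x ∩ blocks l J,
        (⟨x, A x ∩ blocks l J, P, inter_subset_left, h⟩ : TreePoint A) ∈ Z n} := by
  choose bound hbound using fun n => TreePoint.exists_bound_inter_of_dense hA (hD n) (hx n)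
  have hnext (l : ℕ) : ∃ l' > l, ∀ n ≤ l, bound n l ≤ l' := by
    obtain ⟨N, hN⟩ := ((finite_Iic l).image (bound · l)).bddAbove
    exact ⟨max (l + 1) N, (Nat.lt_succ_self l).trans_le (le_max_left ..), fun n hn =>
      (hN (mem_image_of_mem (bound · l) hn)).trans (le_max_right ..)⟩
  choose next hlt hnext using hnext
  let l (j : ℕ) : ℕ := next^[j] 0
  have hsucc (j : ℕ) : l (j + 1) = next (l j) := iterate_succ_apply' next j 0
  have hl : StrictMono l := strictMono_nat_of_lt_succ fun j => hsucc j ▸ hlt (l j)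
  refine ⟨l, hl, rfl, fun J hJ n m hm => ?_⟩
  obtain ⟨j, hj, hjmax⟩ := hJ.exists_gt (max n m)
  have hlj : max n m < l j := hjmax.trans_le (hl.id_le j)
  refine ⟨l j, fun P ⟨hP, hPZ⟩ Q ⟨hQ, hQZ⟩ hPQ => ?_⟩
  obtain ⟨d, hd, hcode, hinter⟩ := hbound n (l j) _ hQZ
  refine TreePoint.mem_iff_mem_of_not_conflict (l' := l (j + 1))
    (hZ n hPZ (hDZ n hd) fun h => hx n d hd (congrArg TreePoint.idx h)) (hx n d hd) hcode
    (hinter.trans (Iio_subset_Iio ?_)) (.refl _ _) hPQ ?_ ((le_max_right ..).trans_lt hlj) hm hm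
  · exact hsucc j ▸ hnext (l j) n ((le_max_left ..).trans hlj.le)
  · exact disjoint_left.2 fun i hi hij => hj ((mem_blocks_iff hl.monotone hij).1 hi.2)

/-- Veličković's theorem. -/
theorem TreeLike.countable_not_trivialOn (hOCA : OpenColoringAxiom) (hF : IsAlmostHom F)
    (hA : TreeLike A) (κ : ℕ → ℕ) :
    {x | ∀ k, ¬ TrivialOn F (A x ∩ κ ⁻¹' {k})}.Countable := by
  obtain ⟨Z, hcover, hZ⟩ := TreePoint.exists_cover_pairwise_not_conflict hOCA hF hA
  choose D hDZ hDcount hD using fun n => exists_countable_dense_sequences (TreePoint.code F) (Z n)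
  refine (countable_iUnion fun n => (hDcount n).image TreePoint.idx).mono fun x hx => ?_
  by_contra hxD
  obtain ⟨l, hl, hl₀, hcont⟩ := hA.exists_strictMono_isContinuousFamily hZ hDZ hD
    (x := x) fun n d hd h => hxD (mem_iUnion.2 ⟨n, d, hd, h.symm⟩)
  have hfin (J : Set ℕ) (hJ : Jᶜ.Infinite) :
      {k | ¬ TrivialOn F (A x ∩ blocks l J ∩ κ ⁻¹' {k})}.Finite := by
    refine finite_not_trivialOn_of_cover hF (hcont J hJ) (fun P hP => ?_) κ
    obtain ⟨n, hn⟩ := mem_iUnion.1 (hcover.symm ▸ mem_univ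
      (⟨x, A x ∩ blocks l J, P, inter_subset_left, hP⟩ : TreePoint A))
    exact ⟨n, hP, hn⟩
  have heven : {j : ℕ | Even j}.Infinite := Nat.frequently_atTop_iff_infinite.1 Nat.frequently_even
  have hodd : {j : ℕ | Even j}ᶜ.Infinite := Nat.frequently_atTop_iff_infinite.1
    (Nat.frequently_odd.mono fun j hj => Nat.not_even_iff_odd.2 hj)
  obtain ⟨k, hk⟩ := ((hfin _ hodd).union (hfin {j | Even j}ᶜ (by rwa [compl_compl]))).exists_notMem
  rw [mem_union, not_or, mem_ofPred_eq, mem_ofPred_eq, not_not, not_not, blocks_compl hl hl₀] at hk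
  refine hx k ((hk.1.union hF hk.2).mono fun i hi => ?_)
  by_cases h : i ∈ blocks l {j | Even j} <;> simp_all

end TreeLike

/-! ### Cells of the space `ℕ × 2^ℕ` -/

/-- The points of the column of `p` that agree with `p` in the first `l` coordinates. -/
def cell (p : SpaceC) (l : ℕ) : Set SpaceC := {p.1} ×ˢ PiNat.cylinder p.2 l

/-- A name for the cell `cell p (f p.1)` of `p` when column `n` is cut into cells of depth `f n`. -/
def cellCode (f : ℕ → ℕ) (p : SpaceC) : ℕ := Encodable.encode (p.1, PiNat.res p.2 (f p.1))

/-- A union of the cells of depth `f n` in the columns `n`. -/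
def Saturated (f : ℕ → ℕ) (U : Set SpaceC) : Prop :=
  ∀ p ∈ U, ∀ q, cellCode f q = cellCode f p → q ∈ U

section Cell

variable {f f' : ℕ → ℕ} {U : Set SpaceC} {p q : SpaceC} {l l' : ℕ}

theorem mem_cell : q ∈ cell p l ↔ q.1 = p.1 ∧ ∀ i < l, q.2 i = p.2 i := Iff.rfl

theorem cell_anti (h : l ≤ l') : cell p l' ⊆ cell p l :=
  prod_mono subset_rfl (PiNat.cylinder_anti _ h)

theorem measurableSet_cell (p : SpaceC) (l : ℕ) : MeasurableSet (cell p l) :=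
  (measurableSet_singleton _).prod (PiNat.isOpen_cylinder _ _ _).measurableSet

theorem cylinder_eq_cyl (x : ℕ → Bool) (l : ℕ) :
    PiNat.cylinder x l = cyl (List.ofFn fun i : Fin l => x i) := by
  ext y
  simp [PiNat.mem_cylinder_iff, cyl, Fin.forall_iff]

theorem measure_cell {μ : Measure SpaceC}
    (hμ : ∀ (n : ℕ) (s : List Bool), μ (({n} : Set ℕ) ×ˢ cyl s) = (2 : ENNReal)⁻¹ ^ s.length)
    (p : SpaceC) (l : ℕ) : μ (cell p l) = 2⁻¹ ^ l := by
  rw [cell, cylinder_eq_cyl, hμ, List.length_ofFn]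

theorem cellCode_eq_cellCode_iff :
    cellCode f q = cellCode f' p ↔ f q.1 = f' q.1 ∧ q ∈ cell p (f' p.1) := by
  rw [cellCode, cellCode, Encodable.encode_inj, Prod.mk.injEq, mem_cell, and_left_comm]
  refine and_congr_right fun h => ?_
  rw [h]
  constructor
  · intro hres
    have hlen : f p.1 = f' p.1 := by
      simpa only [PiNat.res_length] using congrArg List.length hres
    rw [hlen] at hres
    exact ⟨hlen, fun i hi => PiNat.res_eq_res.1 hres hi⟩
  · rintro ⟨hlen, hres⟩
    rw [hlen]
    exact PiNat.res_eq_res.2 fun i hi => hres i hi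

theorem cellCode_eq_iff : cellCode f q = cellCode f p ↔ q ∈ cell p (f p.1) :=
  cellCode_eq_cellCode_iff.trans (and_iff_right rfl)

theorem cellCode_eq_of_le (h : f p.1 ≤ f' p.1) (heq : cellCode f' q = cellCode f' p) :
    cellCode f q = cellCode f p :=
  cellCode_eq_iff.2 (cell_anti h (cellCode_eq_iff.1 heq))

theorem cellCode_inf_eq_of_cellCode_eq {s s' : ℕ → ℕ} {p' q' : SpaceC}
    (hp : cellCode s p' = cellCode f p) (hq : cellCode s' q' = cellCode f' q)
    (h : cellCode (s ⊓ s') p' = cellCode (s ⊓ s') q') :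
    cellCode (f ⊓ f') p = cellCode (f ⊓ f') q := by
  simp only [cellCode_eq_cellCode_iff, mem_cell, Pi.inf_apply, true_and, lt_inf_iff] at *
  obtain ⟨hfp, hcolp, hp⟩ := hp
  obtain ⟨hfq, hcolq, hq⟩ := hq
  obtain ⟨hcol, h⟩ := h
  have hpq : p.1 = q.1 := hcolp.symm.trans (hcol.trans hcolq)
  refine ⟨hpq, fun i ⟨hi, hi'⟩ => ?_⟩
  rw [← hp i (hpq ▸ hi), ← hq i hi']
  refine h i ⟨?_, ?_⟩
  · rwa [← hcol, hfp, hcol, hcolq]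
  · rwa [hfq, hcolq]

theorem finite_image_cellCode (f : ℕ → ℕ) {s : Set ℕ} (hs : s.Finite) :
    (cellCode f '' (Prod.fst ⁻¹' s)).Finite := by
  refine ((hs.biUnion fun n _ => (List.finite_length_eq Bool (f n)).image (Prod.mk n)).image
    Encodable.encode).subset ?_
  rintro _ ⟨p, hp, rfl⟩
  exact mem_image_of_mem _ (mem_biUnion hp ⟨_, PiNat.res_length .., rfl⟩)

theorem cellCode_invFun_cellCode (f : ℕ → ℕ) (p : SpaceC) :
    cellCode f (invFun (cellCode f) (cellCode f p)) = cellCode f p :=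
  invFun_eq ⟨p, rfl⟩

theorem saturated_preimage_fst (f : ℕ → ℕ) (a : Set ℕ) : Saturated f (Prod.fst ⁻¹' a) := by
  intro p hp q h
  rwa [mem_preimage, (cellCode_eq_iff.1 h).1]

theorem Saturated.inter {V : Set SpaceC} (hU : Saturated f U) (hV : Saturated f V) :
    Saturated f (U ∩ V) :=
  fun p hp q h => ⟨hU p hp.1 q h, hV p hp.2 q h⟩

theorem saturated_preimage_cellCode (f : ℕ → ℕ) (W : Set ℕ) :
    Saturated f (cellCode f ⁻¹' W) := by
  intro p hp q h
  rwa [mem_preimage, h]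

theorem Saturated.preimage_image_cellCode (hU : Saturated f U) :
    cellCode f ⁻¹' (cellCode f '' U) = U :=
  (subset_preimage_image _ _).antisymm' fun q ⟨p, hp, h⟩ => hU p hp q h.symm

theorem Saturated.measurableSet (hU : Saturated f U) : MeasurableSet U := by
  rw [← hU.preimage_image_cellCode, ← biUnion_preimage_singleton]
  refine .biUnion (to_countable _) ?_
  rintro _ ⟨p, -, rfl⟩
  convert measurableSet_cell p (f p.1) using 1
  exact Set.ext fun q => cellCode_eq_iff

theorem measurable_cellCode (f : ℕ → ℕ) : Measurable (cellCode f) :=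
  fun W _ => (saturated_preimage_cellCode f W).measurableSet

end Cell

/-! ### Point maps inducing a homomorphism on cells -/

/-- `G` induces `Φ`, modulo finite sets, on the algebra of unions of cells of depth `f n` in the
columns `n ∈ a`. -/
def IsPointMap (Φ : Set SpaceC → Set ℕ) (a : Set ℕ) (f : ℕ → ℕ) (G : ℕ → SpaceC) : Prop :=
  ∀ U ⊆ Prod.fst ⁻¹' a, Saturated f U →
    ∀ᶠ m in atTop, m ∈ Φ U ↔ m ∈ Φ (Prod.fst ⁻¹' a) ∧ G m ∈ U

section PointMap

variable {Φ : Set SpaceC → Set ℕ} {a : Set ℕ} {f f' : ℕ → ℕ} {G : ℕ → SpaceC}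

theorem IsPointMap.of_le (hG : IsPointMap Φ a f' G) (h : ∀ n ∈ a, f n ≤ f' n) :
    IsPointMap Φ a f G :=
  fun U hUa hU => hG U hUa fun p hp q hq => hU p hp q (cellCode_eq_of_le (h _ (hUa hp)) hq)

theorem TrivialOn.exists_isPointMap
    (h : TrivialOn (fun P => Φ (cellCode f ⁻¹' P)) (cellCode f '' (Prod.fst ⁻¹' a))) :
    ∃ G, IsPointMap Φ a f G := by
  obtain ⟨g, hg⟩ := h
  refine ⟨fun m => invFun (cellCode f) (g m), fun U hUa hU => ?_⟩
  filter_upwards [hg _ (image_mono hUa), hg _ subset_rfl] with m hmU hma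
  rw [hU.preimage_image_cellCode] at hmU
  rw [(saturated_preimage_fst f a).preimage_image_cellCode] at hmU hma
  refine hmU.trans (and_congr_right fun hm => ?_)
  obtain ⟨p, -, hp⟩ := (hma.1 hm).2
  have hcode := cellCode_invFun_cellCode f p
  rw [← hp]
  refine ⟨?_, fun h => ⟨_, h, hcode⟩⟩
  rintro ⟨q, hq, hqp⟩
  exact hU q hq _ (hcode.trans hqp.symm)

theorem exists_infinite_forall_isPointMap (hOCA : OpenColoringAxiom) (hΦ : IsAlmostHom Φ) :
    ∃ a : Set ℕ, a.Infinite ∧ ∀ f, ∃ G, IsPointMap Φ a f G := by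
  obtain ⟨A, κ, hA, hinf⟩ := exists_treeLike_infinite_fibers
  by_contra! hno
  choose φ hφ using fun x k => hno _ (hinf x k)
  have : Uncountable (ℕ → Bool) :=
    Cardinal.aleph0_lt_mk_iff.1 (by simpa using Cardinal.aleph0_lt_continuum)
  obtain ⟨Y, -, hY, f, hf⟩ :=
    hOCA.exists_not_countable_bddAbove not_countable_univ fun x n => φ x (κ n) n
  have hcol (p : SpaceC) : (invFun (cellCode f) (cellCode f p)).1 = p.1 :=
    (cellCode_eq_iff.1 (cellCode_invFun_cellCode f p)).1
  have hcount := TreeLike.countable_not_trivialOn hOCA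
    (hΦ.comp_preimage (measurable_cellCode f))
    (hA.image_preimage (fun p q h => (cellCode_eq_iff.1 h).1)
      fun l => finite_image_cellCode f (finite_Iio l))
    fun i => κ (invFun (cellCode f) i).1
  refine hY (hcount.mono fun x hx => ?_)
  intro k htriv
  obtain ⟨G, hG⟩ := TrivialOn.exists_isPointMap (a := A x ∩ κ ⁻¹' {k}) (htriv.mono (by
    rintro _ ⟨p, ⟨hp, hk⟩, rfl⟩
    exact ⟨mem_image_of_mem _ hp, (congrArg κ (hcol p)).trans hk⟩))
  exact hφ x k G (hG.of_le fun n hn => hn.2 ▸ hf ⟨x, hx, rfl⟩ n)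

end PointMap

/-! ### Coherent choices of cells -/

theorem eventually_eq_of_forall_eventually_mem_iff {α : Type*} {M : Set ℕ} {u v : ℕ → α}
    (h : ∀ U : Set α, ∀ᶠ m in atTop, m ∈ M → (u m ∈ U ↔ v m ∈ U)) :
    ∀ᶠ m in atTop, m ∈ M → u m = v m := by
  by_contra hne
  have hfreq : ∃ᶠ m in atTop, m ∈ M ∧ u m ≠ v m := by
    simpa only [not_eventually, Classical.not_imp] using hne
  have havoid (c : α) : ∀ᶠ m in atTop, m ∈ M ∧ u m ≠ v m → u m ≠ c ∧ v m ≠ c := by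
    filter_upwards [h {c}] with m hm hmne
    have hiff := hm hmne.1
    exact ⟨fun hu => hmne.2 (hu.trans (hiff.1 hu).symm),
      fun hv => hmne.2 ((hiff.2 hv).trans hv.symm)⟩
  obtain ⟨s, hs, hfree⟩ := exists_seq_of_forall_finset_exists (fun m => m ∈ M ∧ u m ≠ v m)
    (fun m m' => m < m' ∧ u m' ≠ v m ∧ v m' ≠ u m) fun t _ => by
      have hlater : ∀ᶠ m' in atTop, ∀ m ∈ t, m' ∈ M ∧ u m' ≠ v m' →
          m < m' ∧ u m' ≠ v m ∧ v m' ≠ u m := by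
        refine (eventually_all_finset t).2 fun m _ => ?_
        filter_upwards [havoid (u m), havoid (v m), eventually_gt_atTop m] with m' hu hv hlt hm'
        exact ⟨hlt, (hv hm').1, (hu hm').2⟩
      obtain ⟨m', hm', hlt⟩ := (hfreq.and_eventually hlater).exists
      exact ⟨m', hm', fun m hm => hlt m hm hm'⟩
  have hmono : StrictMono s := fun i j hij => (hfree i j hij).1
  obtain ⟨n, hn⟩ := (hmono.tendsto_atTop.eventually (h (range (u ∘ s)))).exists
  obtain ⟨k, hk⟩ := (hn (hs n).1).1 ⟨n, rfl⟩
  rcases lt_trichotomy k n with hkn | rfl | hnk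
  · exact (hfree k n hkn).2.2 hk.symm
  · exact (hs k).2 hk
  · exact (hfree n k hnk).2.1 hk

theorem IsPointMap.eventually_cellCode_eq {Φ : Set SpaceC → Set ℕ} {a : Set ℕ} {f f' : ℕ → ℕ}
    {G G' : ℕ → SpaceC} (hG : IsPointMap Φ a f G) (hG' : IsPointMap Φ a f' G') (hle : f ≤ f') :
    ∀ᶠ m in atTop, m ∈ Φ (Prod.fst ⁻¹' a) → cellCode f (G m) = cellCode f (G' m) := by
  refine eventually_eq_of_forall_eventually_mem_iff fun W => ?_
  have hsat := (saturated_preimage_fst f a).inter (saturated_preimage_cellCode f W)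
  filter_upwards [hG _ inter_subset_left hsat, hG _ subset_rfl (saturated_preimage_fst f a),
    (hG'.of_le fun n _ => hle n) _ inter_subset_left hsat,
    (hG'.of_le fun n _ => hle n) _ subset_rfl (saturated_preimage_fst f a)]
    with m hW ha hW' ha' hm
  have hGa : G m ∈ Prod.fst ⁻¹' a := (ha.1 hm).2
  have hGa' : G' m ∈ Prod.fst ⁻¹' a := (ha'.1 hm).2
  rw [hW, and_iff_right hm, and_iff_right hm] at hW'
  simpa only [mem_inter_iff, hGa, hGa', true_and, mem_preimage] using hW'

/-- The cell of depth `f n` around `G f m` and the cell of depth `f' n` around `G f' m` lie in the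
same column `n` and are nested. -/
def CoherentAt (G : (ℕ → ℕ) → ℕ → SpaceC) (m : ℕ) (f f' : ℕ → ℕ) : Prop :=
  cellCode (f ⊓ f') (G f m) = cellCode (f ⊓ f') (G f' m)

section Coherence

variable {M : Set ℕ} {G : (ℕ → ℕ) → ℕ → SpaceC}

theorem CoherentAt.symm {m : ℕ} {f f' : ℕ → ℕ} (h : CoherentAt G m f f') :
    CoherentAt G m f' f := by
  rw [CoherentAt, inf_comm]
  exact Eq.symm h

theorem exists_coherentAt_of_not_countable (hOCA : OpenColoringAxiom)
    (hG : ∀ f f', f ≤ f' → ∀ᶠ m in atTop, m ∈ M → cellCode f (G f m) = cellCode f (G f' m))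
    {Y : Set (ℕ → ℕ)} (hY : ¬ Y.Countable) :
    ∃ f ∈ Y, ∃ f' ∈ Y, f ≠ f' ∧ ∀ m ∈ M, CoherentAt G m f f' := by
  obtain ⟨Y', hY'Y, hY', b, hb⟩ := hOCA.exists_not_countable_bddAbove hY id
  rw [image_id] at hb
  obtain ⟨⟨c, t⟩, hct⟩ := exists_not_countable_sep (β := ℕ × List ℕ)
    (r := fun f p => (∀ m ≥ p.1, m ∈ M → cellCode f (G f m) = cellCode f (G b m)) ∧
      (List.range p.1).map (fun m => cellCode f (G f m)) = p.2) hY' fun f hf =>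
    let ⟨c, hc⟩ := eventually_atTop.1 (hG f b (hb hf))
    ⟨(c, (List.range c).map fun m => cellCode f (G f m)), hc, rfl⟩
  obtain ⟨f, ⟨hf, hfb, hft⟩, f', ⟨hf', hfb', hft'⟩, hne⟩ := Set.not_subsingleton_iff.1
    fun h => hct h.countable
  refine ⟨f, hY'Y hf, f', hY'Y hf', hne, fun m hm => ?_⟩
  rcases lt_or_ge m c with hmc | hmc
  · exact cellCode_inf_eq_of_cellCode_eq rfl
      (List.map_inj_left.1 (hft.trans hft'.symm) m (List.mem_range.2 hmc)) rfl
  · exact cellCode_inf_eq_of_cellCode_eq (hfb m hmc hm).symm (hfb' m hmc hm).symm rfl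

theorem exists_forall_exists_eventually_le {H : ℕ → Set (ℕ → ℕ)} (hH : ⋃ n, H n = univ) :
    ∃ n, ∀ g : ℕ → ℕ, ∃ f ∈ H n, ∀ᶠ i in atTop, g i ≤ f i := by
  by_contra! hno
  choose g hg using hno
  obtain ⟨b, -, -, hb⟩ := exists_monotone_dominating (countable_range g) 0
  obtain ⟨n, hn⟩ := mem_iUnion.1 (hH.symm ▸ mem_univ b)
  exact hg n b hn ((hb (g n) (mem_range_self n)).mono fun i hi => not_lt.2 hi.le)

theorem exists_dominating_coherentAt (hOCA : OpenColoringAxiom)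
    (hG : ∀ f f', f ≤ f' → ∀ᶠ m in atTop, m ∈ M → cellCode f (G f m) = cellCode f (G f' m)) :
    ∃ H : Set (ℕ → ℕ), (∀ g : ℕ → ℕ, ∃ f ∈ H, ∀ᶠ i in atTop, g i ≤ f i) ∧
      ∀ f ∈ H, ∀ f' ∈ H, ∀ m ∈ M, CoherentAt G m f f' := by
  have hinj : Injective fun (f : ℕ → ℕ) i => (f i, cellCode f (G f i)) :=
    fun f f' h => funext fun i => congrArg Prod.fst (congrFun h i)
  rcases hOCA.dichotomy_of_coding hinj (R := fun f f' => ∃ m ∈ M, ¬ CoherentAt G m f f')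
    (fun f f' ⟨m, hm, h⟩ => ⟨m, hm, fun hc => h hc.symm⟩) (fun f ⟨m, _, h⟩ => h rfl) (by
      rintro f f' ⟨m, hm, h⟩
      refine ⟨m + 1, fun s s' hs hs' => ⟨m, hm, fun hc => h ?_⟩⟩
      exact cellCode_inf_eq_of_cellCode_eq (Prod.ext_iff.1 (hs m.lt_succ_self)).2
        (Prod.ext_iff.1 (hs' m.lt_succ_self)).2 hc) with ⟨Y, hY, hR⟩ | ⟨H, hcover, hH⟩
  · obtain ⟨f, hf, f', hf', hne, hcoh⟩ := exists_coherentAt_of_not_countable hOCA hG hY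
    obtain ⟨m, hm, h⟩ := hR hf hf' hne
    exact absurd (hcoh m hm) h
  · obtain ⟨n, hn⟩ := exists_forall_exists_eventually_le hcover
    refine ⟨H n, hn, fun f hf f' hf' m hm => ?_⟩
    by_contra h
    exact hH n hf hf' (fun heq => h (heq ▸ rfl)) ⟨m, hm, h⟩

end Coherence

/-! ### The measure algebra -/

section MeasureAlgebra

variable {μ : Measure SpaceC} {Φ : Set SpaceC → Set ℕ} {a M : Set ℕ} {H : Set (ℕ → ℕ)}
  {G : (ℕ → ℕ) → ℕ → SpaceC}

theorem exists_cell_of_forall_coherentAt {m : ℕ}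
    (hG : ∀ f ∈ H, ∀ f' ∈ H, CoherentAt G m f f') (l : ℕ) :
    ∃ p, ∀ f ∈ H, ∀ q, cellCode f q = cellCode f (G f m) → l ≤ f q.1 → q ∈ cell p l := by
  by_cases h : ∃ f ∈ H, ∃ q, cellCode f q = cellCode f (G f m) ∧ l ≤ f q.1
  · obtain ⟨f, hf, p, hp, hlp⟩ := h
    refine ⟨p, fun f' hf' q hq hlq => ?_⟩
    obtain ⟨hcol, hqp⟩ := cellCode_eq_iff.1
      (cellCode_inf_eq_of_cellCode_eq hq.symm hp.symm (hG f' hf' f hf))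
    refine ⟨hcol, fun i hi => hqp i (lt_inf_iff.2 ⟨hi.trans_le ?_, hi.trans_le hlp⟩)⟩
    rwa [← show q.1 = p.1 from hcol]
  · push Not at h
    exact ⟨default, fun f hf q hq hl => absurd hl (h f hf q hq).not_ge⟩

theorem exists_measurableSet_measure_lt_one (hμ : ∀ p l, μ (cell p l) ≤ 2⁻¹ ^ l)
    (hG : ∀ f ∈ H, ∀ f' ∈ H, ∀ m ∈ M, CoherentAt G m f f') :
    ∃ O, MeasurableSet O ∧ μ O < 1 ∧ ∀ f ∈ H, ∀ m ∈ M, ∀ q,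
      cellCode f q = cellCode f (G f m) → m + 2 ≤ f q.1 → q ∈ O := by
  have hcell (m : ℕ) : ∃ p, m ∈ M → ∀ f ∈ H, ∀ q, cellCode f q = cellCode f (G f m) →
      m + 2 ≤ f q.1 → q ∈ cell p (m + 2) := by
    by_cases hm : m ∈ M
    · exact (exists_cell_of_forall_coherentAt (fun f hf f' hf' => hG f hf f' hf' m hm) _).imp
        fun p hp _ => hp
    · exact ⟨default, fun h => absurd h hm⟩
  choose p hp using hcell
  refine ⟨⋃ m, cell (p m) (m + 2), .iUnion fun m => measurableSet_cell _ _, ?_,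
    fun f hf m hm q hq hl => mem_iUnion.2 ⟨m, hp m hm f hf q hq hl⟩⟩
  calc μ (⋃ m, cell (p m) (m + 2)) ≤ ∑' m, μ (cell (p m) (m + 2)) := measure_iUnion_le _
    _ ≤ ∑' m, (2 : ENNReal)⁻¹ * 2⁻¹ ^ (m + 1) :=
      ENNReal.tsum_le_tsum fun m => (hμ _ _).trans_eq (pow_succ' _ _)
    _ = 2⁻¹ := by
      rw [ENNReal.tsum_mul_left, ENNReal.tsum_geometric_add_one, ENNReal.one_sub_inv_two, inv_inv,
        ENNReal.inv_mul_cancel two_ne_zero ENNReal.ofNat_ne_top, mul_one]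
    _ < 1 := ENNReal.one_half_lt_one.trans_eq' (by simp)

theorem exists_ge_mem_column (hμ : ∀ n, 1 ≤ μ (Prod.fst ⁻¹' {n})) (hΦ : IsAlmostHom Φ)
    (hinf : ∀ A, MeasurableSet A → μ A ≠ 0 → (Φ A).Infinite) {f : ℕ → ℕ} {g : ℕ → SpaceC}
    (hg : IsPointMap Φ a f g) {O : Set SpaceC} (hO : MeasurableSet O) (hO₁ : μ O < 1)
    {n : ℕ} (hn : n ∈ a) :
    ∃ m ≥ n, m ∈ Φ (Prod.fst ⁻¹' a \ O) ∧ m ∈ Φ (Prod.fst ⁻¹' a) ∧ (g m).1 = n := by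
  have hcolumn : Prod.fst ⁻¹' {n} ⊆ (Prod.fst ⁻¹' a : Set SpaceC) :=
    preimage_mono (singleton_subset_iff.2 hn)
  have hcolm : MeasurableSet (Prod.fst ⁻¹' {n} : Set SpaceC) :=
    (saturated_preimage_fst f {n}).measurableSet
  have ham : MeasurableSet (Prod.fst ⁻¹' a : Set SpaceC) :=
    (saturated_preimage_fst f a).measurableSet
  have hpos : μ (Prod.fst ⁻¹' {n} \ O) ≠ 0 :=
    ((tsub_pos_of_lt (hO₁.trans_le (hμ n))).trans_le le_measure_sdiff).ne'
  have hfreq := Nat.frequently_atTop_iff_infinite.2 (hinf _ (hcolm.diff hO) hpos)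
  obtain ⟨m, hm, hmono, hcol, hpt, hge⟩ := (hfreq.and_eventually
    ((hΦ.mono (sdiff_subset_sdiff_left hcolumn) (hcolm.diff hO) (ham.diff hO)).and
    ((hΦ.mono sdiff_subset (hcolm.diff hO) hcolm).and
    ((hg _ hcolumn (saturated_preimage_fst f {n})).and (eventually_ge_atTop n))))).exists
  obtain ⟨hma, hmn⟩ := hpt.1 (hcol hm)
  exact ⟨m, hge, hmono hm, hma, hmn⟩

theorem IsPointMap.exists_saturated_eventually_mem {f e : ℕ → ℕ} {g : ℕ → SpaceC}
    (hg : IsPointMap Φ a f g)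
    (he : ∀ n ∈ a, n ≤ e n ∧ e n ∈ Φ (Prod.fst ⁻¹' a) ∧ (g (e n)).1 = n) (N : ℕ) :
    ∃ U, Saturated f U ∧ (∀ q ∈ U, N ≤ q.1 ∧ q.1 ∈ a ∧ cellCode f q = cellCode f (g (e q.1))) ∧
      ∀ᶠ n in atTop, n ∈ a → e n ∈ Φ U := by
  let U : Set SpaceC := {q | N ≤ q.1 ∧ q.1 ∈ a ∧ cellCode f q = cellCode f (g (e q.1))}
  have hU : Saturated f U := fun p hp q hq => by
    have hcol : q.1 = p.1 := (cellCode_eq_iff.1 hq).1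
    refine ⟨hcol ▸ hp.1, hcol ▸ hp.2.1, hcol ▸ hq.trans hp.2.2⟩
  obtain ⟨N', hN'⟩ := eventually_atTop.1 (hg U (fun q hq => hq.2.1) hU)
  refine ⟨U, hU, fun q hq => hq, ?_⟩
  filter_upwards [eventually_ge_atTop N, eventually_ge_atTop N'] with n hn hn' hna
  obtain ⟨hle, hmem, hcol⟩ := he n hna
  refine (hN' (e n) (hn'.trans hle)).2 ⟨hmem, ?_⟩
  simp only [U, mem_ofPred_eq, hcol]
  exact ⟨hn, hna, trivial⟩

end MeasureAlgebra

theorem OCA_implies_measure_algebra_does_not_embed_general (hOCA : OpenColoringAxiom)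
    (μ : Measure SpaceC)
    (hμ : ∀ (n : ℕ) (s : List Bool), μ (({n} : Set ℕ) ×ˢ cyl s) = (2 : ENNReal)⁻¹ ^ s.length)
    {Φ : Set SpaceC → Set ℕ} (hΦ : IsAlmostHom Φ) :
    ∃ A, MeasurableSet A ∧ (Φ A).Finite ∧ μ A ≠ 0 := by
  by_contra! hnull
  have hinf (A : Set SpaceC) (hA : MeasurableSet A) (hpos : μ A ≠ 0) : (Φ A).Infinite :=
    fun hfin => hpos (hnull A hA hfin)
  have hcolumn (n : ℕ) : 1 ≤ μ (Prod.fst ⁻¹' {n}) :=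
    ((measure_cell hμ (n, default) 0).trans (pow_zero _)).ge.trans (measure_mono fun q hq => hq.1)
  obtain ⟨a, ha, hpoint⟩ := exists_infinite_forall_isPointMap hOCA hΦ
  choose G hG using hpoint
  obtain ⟨H, hdom, hcoh⟩ := exists_dominating_coherentAt hOCA
    fun f f' => (hG f).eventually_cellCode_eq (hG f')
  obtain ⟨O, hO, hO₁, hcover⟩ := exists_measurableSet_measure_lt_one
    (fun p l => (measure_cell hμ p l).le) hcoh
  obtain ⟨f₀, hf₀, -⟩ := hdom 0
  choose! e hge hK hM hcol using fun n => exists_ge_mem_column hcolumn hΦ hinf (hG f₀) hO hO₁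
    (n := n)
  -- For this `f` the cells chosen at the points `e n` are small enough to be covered by `O`.
  obtain ⟨f, hf, hfe⟩ := hdom fun n => e n + 2
  obtain ⟨N, hN⟩ := eventually_atTop.1 hfe
  have hcolf (n : ℕ) (hn : n ∈ a) : (G f (e n)).1 = n :=
    (cellCode_eq_iff.1 (hcoh f hf f₀ hf₀ _ (hM n hn))).1.trans (hcol n hn)
  obtain ⟨U, hU, hUe, hmem⟩ := (hG f).exists_saturated_eventually_mem
    (fun n hn => ⟨hge n hn, hM n hn, hcolf n hn⟩) N
  have hUO : U ⊆ O := fun q hq =>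
    let ⟨hNq, hqa, hcode⟩ := hUe q hq
    hcover f hf _ (hM _ hqa) q hcode (hN _ hNq)
  obtain ⟨m, hm⟩ := eventually_atTop.1 (hΦ.disjoint (disjoint_sdiff_right.mono_left hUO)
    hU.measurableSet ((saturated_preimage_fst f a).measurableSet.diff hO))
  obtain ⟨n, hna, hnm, hn⟩ := ((Nat.frequently_atTop_iff_infinite.2 ha).and_eventually
    ((eventually_ge_atTop m).and hmem)).exists
  exact hm (e n) (hnm.trans (hge n hna)) (hn hna) (hK n hna)

/-- OCA implies that the measure algebra does not embed into `𝒫(ℕ)/fin`.  Here `μ` is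
the Borel measure on `C = ℕ × 2^ℕ` determined by `μ({n} × [s]) = 2^{-|s|}`, and a map
`Φ` as below is precisely a lifting of an injective Boolean algebra homomorphism of the
measure algebra `Borel(C)/null` into `𝒫(ℕ)/fin`. -/
theorem OCA_implies_measure_algebra_does_not_embed
    (hOCA : OpenColoringAxiom)
    (μ : Measure SpaceC)
    (hμ : ∀ (n : ℕ) (s : List Bool),
      μ (({n} : Set ℕ) ×ˢ cyl s) = (2 : ENNReal)⁻¹ ^ s.length) :
    ¬ ∃ Φ : Set SpaceC → Set ℕ,
        (∀ A B : Set SpaceC, MeasurableSet A → MeasurableSet B →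
          μ (symmDiff A B) = 0 → (symmDiff (Φ A) (Φ B)).Finite) ∧
        (∀ A B : Set SpaceC, MeasurableSet A → MeasurableSet B →
          (symmDiff (Φ (A ∪ B)) (Φ A ∪ Φ B)).Finite) ∧
        (∀ A : Set SpaceC, MeasurableSet A →
          (symmDiff (Φ Aᶜ) ((Φ A)ᶜ)).Finite) ∧
        (∀ A : Set SpaceC, MeasurableSet A → ((Φ A).Finite ↔ μ A = 0)) := by
  rintro ⟨Φ, -, hunion, hcompl, hnull⟩
  obtain ⟨A, hA, hfin, hpos⟩ := OCA_implies_measure_algebra_does_not_embed_general hOCA μ hμ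
    (.of_finite_symmDiff hunion hcompl)
  exact hpos ((hnull A hA).1 hfin)
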